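/- Let γ : [a,b] → ℝ³ be a minimal inspection curve parametrized with constant speed. Then for almost every t ∈ [a,b], the vectors γ(t) and γ′(t) are linearly independent (equivalently, |γ(t)|²·|γ′(t)|² − ⟨γ(t),γ′(t)⟩² > 0); consequently the spherical arclength function θ(t) := L((γ/|γ|)|[a,t]) is strictly increasing on [a,b], and the unfolding γ̃(t) = |γ(t)|(cos θ(t), sin θ(t)) is locally one-to-one. -/

import Mathlib

open MeasureTheory Set Real
open scoped ENNReal NNReal RealInnerProductSpace

noncomputable section

abbrev E3 := EuclideanSpace ℝ (Fin 3)
abbrev E2 := EuclideanSpace ℝ (Fin 2)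

/-- A closed rectifiable curve on `[a,b]` whose convex hull contains the unit sphere. -/
def IsInspection (a b : ℝ) (γ : ℝ → E3) : Prop :=
  a < b ∧ ContinuousOn γ (Set.Icc a b) ∧ γ a = γ b ∧ eVariationOn γ (Set.Icc a b) ≠ ⊤ ∧
    Metric.sphere (0 : E3) 1 ⊆ convexHull ℝ (γ '' Set.Icc a b)

/-- A minimal inspection curve: an inspection curve of least length. -/
def IsMinimalInspection (a b : ℝ) (γ : ℝ → E3) : Prop :=
  IsInspection a b γ ∧
    ∀ (c d : ℝ) (β : ℝ → E3), IsInspection c d β →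
      eVariationOn γ (Set.Icc a b) ≤ eVariationOn β (Set.Icc c d)

/-- The arclength of the radial (spherical) projection `γ/|γ|` over `[a,t]`. -/
def sphericalArc (a : ℝ) (γ : ℝ → E3) (t : ℝ) : ℝ :=
  (eVariationOn (fun s => ‖γ s‖⁻¹ • γ s) (Set.Icc a t)).toReal

/-- The (cone) unfolding of a space curve: the planar curve with the same height and
the spherical arclength as polar angle. -/
def unfolding (a : ℝ) (γ : ℝ → E3) (t : ℝ) : E2 :=
  ‖γ t‖ • (WithLp.equiv 2 (Fin 2 → ℝ)).symm
    ![Real.cos (sphericalArc a γ t), Real.sin (sphericalArc a γ t)]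

lemma ball_sub_of_support {S : Set E3} {σ : ℝ} (hσ : 0 < σ)
    (h : ∀ n : E3, ∃ s ∈ S, σ * ‖n‖ ≤ ⟪n, s⟫) : Metric.ball 0 σ ⊆ convexHull ℝ S := by
  have hcl : Metric.ball (0 : E3) σ ⊆ closure (convexHull ℝ S) := by
    intro x hx
    by_contra hxn
    obtain ⟨f, u, hf, hu⟩ := geometric_hahn_banach_closed_point
      ((convex_convexHull ℝ S).closure) isClosed_closure hxn
    set n := (InnerProductSpace.toDual ℝ E3).symm f with hn
    have hfn : ∀ y, f y = ⟪n, y⟫ := by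
      intro y; rw [hn, InnerProductSpace.toDual_symm_apply]
    obtain ⟨s, hs, hsn⟩ := h n
    have h1 := hf s (subset_closure (subset_convexHull ℝ S hs))
    rw [hfn] at h1 hu
    have h2 := real_inner_le_norm n x
    have h3 : ‖x‖ < σ := by simpa using hx
    have := mul_le_mul_of_nonneg_left h3.le (norm_nonneg n)
    nlinarith
  have hintg : (interior (convexHull ℝ S)).Nonempty := by
    rw [(convex_convexHull ℝ S).interior_nonempty_iff_affineSpan_eq_top]
    have hc : IsClosed (affineSpan ℝ (convexHull ℝ S) : Set E3) :=
      AffineSubspace.closed_of_finiteDimensional _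
    have h1 : Metric.ball (0 : E3) σ ⊆ (affineSpan ℝ (convexHull ℝ S) : Set E3) :=
      hcl.trans (closure_minimal (subset_affineSpan ℝ _) hc)
    have h2 : affineSpan ℝ (Metric.ball (0 : E3) σ) = ⊤ :=
      affineSpan_eq_top_of_nonempty_interior
        (by
          rw [(convex_ball (0 : E3) σ).convexHull_eq, Metric.isOpen_ball.interior_eq]
          exact ⟨0, by simpa using hσ⟩)
    rw [eq_top_iff, ← h2]
    exact affineSpan_le.2 h1
  have := (convex_convexHull ℝ S).interior_closure_eq_interior_of_nonempty_interior hintg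
  intro x hx
  have hx' : x ∈ interior (closure (convexHull ℝ S)) :=
    (interior_maximal hcl Metric.isOpen_ball) hx
  rw [this] at hx'
  exact interior_subset hx'

lemma support_of_sub {S : Set E3} (hS : IsCompact S) (hne : S.Nonempty) {σ : ℝ} (hσ : 0 < σ)
    (h : Metric.sphere 0 σ ⊆ convexHull ℝ S) (n : E3) : ∃ s ∈ S, σ * ‖n‖ ≤ ⟪n, s⟫ := by
  obtain ⟨s, hs, hmax⟩ := hS.exists_isMaxOn hne
    (f := fun x : E3 => ⟪n, x⟫) (by fun_prop)
  refine ⟨s, hs, ?_⟩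
  rcases eq_or_ne n 0 with rfl | hn
  · simp
  have hn' : 0 < ‖n‖ := norm_pos_iff.2 hn
  have hc : Convex ℝ {x : E3 | ⟪n, x⟫ ≤ ⟪n, s⟫} :=
    convex_halfSpace_le (IsLinearMap.mk (fun x y => inner_add_right _ _ _)
      (fun c x => by simp [inner_smul_right])) _
  have h1 : convexHull ℝ S ⊆ {x : E3 | ⟪n, x⟫ ≤ ⟪n, s⟫} :=
    convexHull_min (fun x hx => hmax hx) hc
  have h2 : (σ / ‖n‖) • n ∈ Metric.sphere (0 : E3) σ := by
    simp [norm_smul, abs_of_pos hσ, hn'.ne']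
  have h3 := h1 (h h2)
  simp only [mem_setOf_eq, inner_smul_right, real_inner_self_eq_norm_sq] at h3
  have : σ / ‖n‖ * ‖n‖ ^ 2 = σ * ‖n‖ := by field_simp
  linarith

/-- FTC for Lipschitz real functions. -/
lemma lip_ftc {f : ℝ → ℝ} {K : ℝ≥0} (hf : LipschitzWith K f) (a b : ℝ) :
    ∫ t in a..b, deriv f t = f b - f a :=
  (hf.lipschitzOnWith.absolutelyContinuousOnInterval).integral_deriv_eq_sub

lemma norm_deriv_le_lip {F : Type*} [NormedAddCommGroup F] [NormedSpace ℝ F]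
    {f : ℝ → F} {K : ℝ≥0} (hf : LipschitzWith K f) (t : ℝ) : ‖deriv f t‖ ≤ K :=
  norm_deriv_le_of_lipschitz hf

lemma lip_inner {β : ℝ → E3} {K : ℝ≥0} (hβ : LipschitzWith K β) (u : E3) :
    LipschitzWith (‖u‖₊ * K) (fun t => ⟪u, β t⟫) := by
  refine LipschitzWith.of_dist_le_mul fun x y => ?_
  have h := hβ.dist_le_mul x y
  rw [Real.dist_eq, ← inner_sub_right]
  rw [dist_eq_norm] at h
  calc |⟪u, β x - β y⟫| ≤ ‖u‖ * ‖β x - β y‖ := abs_real_inner_le_norm _ _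
    _ ≤ ‖u‖ * (K * dist x y) := by gcongr
    _ = _ := by push_cast; ring

lemma hasDerivAt_inner_const {β : ℝ → E3} {v : E3} {t : ℝ} (h : HasDerivAt β v t) (u : E3) :
    HasDerivAt (fun t => ⟪u, β t⟫) ⟪u, v⟫ t := by
  have := (hasDerivAt_const t u).inner ℝ h
  simpa using this

lemma intervalIntegrable_of_bdd {f : ℝ → ℝ} {M : ℝ} (hf : Measurable f) (hM : ∀ t, |f t| ≤ M)
    (a b : ℝ) : IntervalIntegrable f volume a b := by
  rw [intervalIntegrable_iff]
  exact Measure.integrableOn_of_bounded (M := M) (by simp) hf.aestronglyMeasurable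
    (Filter.Eventually.of_forall hM)

lemma norm_sub_le_integral {β : ℝ → E3} {K : ℝ≥0} (hβ : LipschitzWith K β) {s t : ℝ}
    (hst : s ≤ t) : ‖β t - β s‖ ≤ ∫ x in s..t, ‖deriv β x‖ := by
  set u : E3 := ‖β t - β s‖⁻¹ • (β t - β s) with hu
  have hun : ‖u‖ ≤ 1 := by
    rw [hu, norm_smul, norm_inv, norm_norm]
    exact inv_mul_le_one
  have h1 := lip_ftc (lip_inner hβ u) s t
  have h2 : ⟪u, β t⟫ - ⟪u, β s⟫ = ‖β t - β s‖ := by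
    rw [← inner_sub_right, hu, inner_smul_left, real_inner_self_eq_norm_sq]
    rcases eq_or_ne (‖β t - β s‖) 0 with h | h
    · simp [h]
    · simp; field_simp
  rw [← h2, ← h1]
  have hm : Measurable (deriv β) := measurable_deriv β
  refine intervalIntegral.integral_mono_ae hst ?_ ?_ ?_
  · exact intervalIntegrable_of_bdd (measurable_deriv _)
      (fun t => norm_deriv_le_lip (lip_inner hβ u) t) _ _
  · exact intervalIntegrable_of_bdd (M := K) hm.norm
      (fun t => by rw [abs_norm]; exact norm_deriv_le_lip hβ t) _ _
  · filter_upwards [hβ.ae_differentiableAt_real] with x hx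
    have := (hasDerivAt_inner_const hx.hasDerivAt u).deriv
    rw [this]
    calc ⟪u, deriv β x⟫ ≤ ‖u‖ * ‖deriv β x‖ := real_inner_le_norm _ _
      _ ≤ 1 * ‖deriv β x‖ := by gcongr
      _ = _ := one_mul _

lemma eVar_le_of_edist_le {F G : Type*} [PseudoEMetricSpace F] [PseudoEMetricSpace G]
    {f : ℝ → F} {g : ℝ → G} {s : Set ℝ}
    (h : ∀ x ∈ s, ∀ y ∈ s, x ≤ y → edist (f y) (f x) ≤ edist (g y) (g x)) :
    eVariationOn f s ≤ eVariationOn g s := by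
  refine iSup_le ?_
  rintro ⟨n, ⟨u, hu, us⟩⟩
  refine le_trans (Finset.sum_le_sum fun i _ => h _ (us i) _ (us (i+1)) (hu (Nat.le_succ i))) ?_
  exact eVariationOn.sum_le hu us

lemma eVar_le_integral {β : ℝ → E3} {K : ℝ≥0} (hβ : LipschitzWith K β) {c d : ℝ} (hcd : c ≤ d) :
    eVariationOn β (Icc c d) ≤ ENNReal.ofReal (∫ x in c..d, ‖deriv β x‖) := by
  have hm : Measurable (deriv β) := measurable_deriv β
  have hI : ∀ a b, IntervalIntegrable (fun x => ‖deriv β x‖) volume a b :=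
    intervalIntegrable_of_bdd (M := K) hm.norm
      (fun t => by rw [abs_norm]; exact norm_deriv_le_lip hβ t)
  set g : ℝ → ℝ := fun t => ∫ x in c..t, ‖deriv β x‖ with hg
  have hgs : ∀ s t, g t - g s = ∫ x in s..t, ‖deriv β x‖ := fun s t =>
    intervalIntegral.integral_interval_sub_left (hI _ _) (hI _ _)
  have hmono : Monotone g := by
    intro s t hst
    have : 0 ≤ g t - g s := by
      rw [hgs]; exact intervalIntegral.integral_nonneg hst (fun _ _ => norm_nonneg _)
    linarith
  have h1 : eVariationOn β (Icc c d) ≤ eVariationOn g (Icc c d) := by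
    apply eVar_le_of_edist_le
    intro x _ y _ hxy
    rw [edist_dist, edist_dist]
    apply ENNReal.ofReal_le_ofReal
    rw [dist_eq_norm, Real.dist_eq, hgs]
    exact (norm_sub_le_integral hβ hxy).trans (le_abs_self _)
  have h2 := (hmono.monotoneOn univ).eVariationOn_le (mem_univ c) (mem_univ d)
  rw [univ_inter] at h2
  refine h1.trans (h2.trans ?_)
  rw [hgs]

/-- A normalised periodic minimal curve. -/
structure NC (Γ : ℝ → E3) (L σ : ℝ) : Prop where
  lip : LipschitzWith 1 Γ
  per : Function.Periodic Γ L
  Lpos : 0 < L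
  sig : 1 ≤ σ
  sup : ∀ n : E3, ∃ s, σ * ‖n‖ ≤ ⟪n, Γ s⟫
  min : ∀ (c d : ℝ) (β : ℝ → E3), c < d → ContinuousOn β (Icc c d) → β c = β d →
    (∀ n : E3, ∃ s ∈ Icc c d, σ * ‖n‖ ≤ ⟪n, β s⟫) → ENNReal.ofReal L ≤ eVariationOn β (Icc c d)

/-- Parameters at which the curve has a supporting plane. -/
def Ex (Γ : ℝ → E3) : Set ℝ := {t | ∃ n : E3, ‖n‖ = 1 ∧ ∀ s, ⟪n, Γ s⟫ ≤ ⟪n, Γ t⟫}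

lemma isClosed_Ex {Γ : ℝ → E3} (h : Continuous Γ) : IsClosed (Ex Γ) := by
  have hcs : CompactSpace (Metric.sphere (0 : E3) 1) :=
    isCompact_iff_compactSpace.1 (isCompact_sphere _ _)
  set Z : Set (ℝ × Metric.sphere (0 : E3) 1) :=
    ⋂ s : ℝ, {z | ⟪(z.2 : E3), Γ s⟫ ≤ ⟪(z.2 : E3), Γ z.1⟫} with hZ
  have hZc : IsClosed Z := by
    refine isClosed_iInter fun s => ?_
    apply isClosed_le <;> fun_prop
  have : Ex Γ = Prod.fst '' Z := by
    ext t
    constructor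
    · rintro ⟨n, hn, hs⟩
      exact ⟨(t, ⟨n, by simpa using hn⟩), by simpa [hZ] using hs, rfl⟩
    · rintro ⟨⟨t', n⟩, hz, rfl⟩
      refine ⟨n, by simp, ?_⟩
      simpa [hZ] using hz
  rw [this]
  exact isClosedMap_fst_of_compactSpace _ hZc

namespace NC
variable {Γ : ℝ → E3} {L σ : ℝ} (H : NC Γ L σ)
include H

lemma cont : Continuous Γ := H.lip.continuous

lemma exists_max (n : E3) : ∃ s, ∀ t, ⟪n, Γ t⟫ ≤ ⟪n, Γ s⟫ := by
  obtain ⟨s, _, hs⟩ := (isCompact_Icc (a := (0:ℝ)) (b := L)).exists_isMaxOn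
    (nonempty_Icc.2 H.Lpos.le) (f := fun t => ⟪n, Γ t⟫)
    (by have := H.cont; fun_prop)
  refine ⟨s, fun t => ?_⟩
  obtain ⟨t', ht', he⟩ := H.per.exists_mem_Ico₀ H.Lpos t
  rw [he]
  exact hs ⟨ht'.1, ht'.2.le⟩

lemma exists_max_Ex {n : E3} (hn : n ≠ 0) : ∃ s ∈ Ex Γ, ∀ t, ⟪n, Γ t⟫ ≤ ⟪n, Γ s⟫ := by
  obtain ⟨s, hs⟩ := H.exists_max n
  refine ⟨s, ⟨‖n‖⁻¹ • n, ?_, ?_⟩, hs⟩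
  · rw [norm_smul, norm_inv, norm_norm, inv_mul_cancel₀ (norm_ne_zero_iff.2 hn)]
  · intro t
    simp only [inner_smul_left]
    exact mul_le_mul_of_nonneg_left (hs t) (by simp)

lemma Ex_add {t : ℝ} (k : ℤ) (ht : t ∈ Ex Γ) : t + k * L ∈ Ex Γ := by
  obtain ⟨n, hn, h⟩ := ht
  refine ⟨n, hn, fun s => ?_⟩
  have : Γ (t + k * L) = Γ t := by
    have := H.per.int_mul k t
    simpa using this
  rw [this]; exact h s

lemma Ex_add_iff {t : ℝ} (k : ℤ) : t + k * L ∈ Ex Γ ↔ t ∈ Ex Γ := by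
  refine ⟨fun h => ?_, H.Ex_add k⟩
  have := H.Ex_add (-k) h
  convert this using 1
  push_cast; ring

lemma Ex_nonempty : (Ex Γ).Nonempty := by
  obtain ⟨s, hs, _⟩ := H.exists_max_Ex (n := EuclideanSpace.single 0 1)
    (by intro h; have := congrArg (fun x : E3 => x 0) h; simp at this)
  exact ⟨s, hs⟩

lemma Ex_le {n : E3} {t : ℝ} (hn : ‖n‖ = 1) (h : ∀ s, ⟪n, Γ s⟫ ≤ ⟪n, Γ t⟫) :
    1 ≤ ⟪n, Γ t⟫ := by
  obtain ⟨s, hs⟩ := H.sup n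
  have := h s
  have := H.sig
  rw [hn] at hs; linarith

lemma one_le_norm {t : ℝ} (ht : t ∈ Ex Γ) : 1 ≤ ‖Γ t‖ := by
  obtain ⟨n, hn, h⟩ := ht
  have h1 := H.Ex_le hn h
  have h2 := real_inner_le_norm n (Γ t)
  rw [hn] at h2; linarith

/-- representative in `(x, x+L]` -/
lemma exists_rep (x t : ℝ) : ∃ k : ℤ, t + k * L ∈ Ioc x (x + L) := by
  have := existsUnique_add_zsmul_mem_Ioc H.Lpos t x
  obtain ⟨k, hk, _⟩ := this
  exact ⟨k, by simpa using hk⟩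

lemma per_int (k : ℤ) (t : ℝ) : Γ (t + k * L) = Γ t := by
  have := H.per.int_mul k t
  simpa using this

lemma eVar_le {x y : ℝ} : eVariationOn Γ (Icc x y) ≤ ENNReal.ofReal (y - x) := by
  have := (H.lip.lipschitzOnWith (s := univ)).comp_eVariationOn_le (g := id) (s := Icc x y)
    (mapsTo_univ _ _)
  simpa [eVariationOn_id_Icc] using this

lemma chord_norm {x y : ℝ} (hxy : x < y) (hyL : y ≤ x + L)
    (hE : ∀ t ∈ Ioo x y, t ∉ Ex Γ) : y - x ≤ ‖Γ y - Γ x‖ := by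
  set d := x + L with hd
  set w := Γ y - Γ x with hw
  set β : ℝ → E3 := fun t => if t ≤ d then Γ t else Γ x + (t - d) • w with hβ
  have hΓd : Γ d = Γ x := H.per x
  have hβc : Continuous β := by
    refine Continuous.if_le H.cont (by fun_prop) continuous_id continuous_const ?_
    rintro t rfl
    simp [hΓd]
  have hcl : β y = β (d + 1) := by
    simp [hβ, hyL, hw]
  have hsup : ∀ n : E3, ∃ s ∈ Icc y (d + 1), σ * ‖n‖ ≤ ⟪n, β s⟫ := by
    intro n
    rcases eq_or_ne n 0 with rfl | hn
    · exact ⟨y, ⟨le_rfl, by linarith⟩, by simp⟩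
    obtain ⟨s, hs, hmax⟩ := H.exists_max_Ex hn
    obtain ⟨s0, hs0⟩ := H.sup n
    obtain ⟨k, hk⟩ := H.exists_rep x s
    have hk' := H.Ex_add k hs
    have hky : y ≤ s + k * L := by
      by_contra hlt
      exact hE _ ⟨hk.1, not_le.1 hlt⟩ hk'
    refine ⟨s + k * L, ⟨hky, by linarith [hk.2]⟩, ?_⟩
    have : β (s + k * L) = Γ s := by
      have hk2 : s + k * L ≤ d := hk.2
      simp only [hβ, if_pos hk2, H.per_int]
    rw [this]
    exact hs0.trans (hmax s0)
  have hmin := H.min y (d + 1) β (by linarith) hβc.continuousOn hcl hsup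
  have hsplit := eVariationOn.Icc_add_Icc β (s := univ) hyL (by linarith : d ≤ d + 1) (mem_univ d)
  simp only [univ_inter] at hsplit
  rw [← hsplit] at hmin
  have h1 : eVariationOn β (Icc y d) ≤ ENNReal.ofReal (d - y) := by
    rw [eVariationOn.congr (g := Γ) (fun t ht => by simp [hβ, ht.2])]
    exact H.eVar_le
  have h2 : eVariationOn β (Icc d (d + 1)) ≤ ENNReal.ofReal ‖w‖ := by
    have hl : LipschitzWith ‖w‖₊ (fun t : ℝ => Γ x + (t - d) • w) := by
      refine LipschitzWith.of_dist_le_mul fun s t => ?_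
      rw [dist_eq_norm, add_sub_add_left_eq_sub, ← sub_smul, norm_smul, Real.dist_eq]
      simp [mul_comm]
    have := (hl.lipschitzOnWith (s := univ)).comp_eVariationOn_le (g := id) (s := Icc d (d+1))
      (mapsTo_univ _ _)
    rw [eVariationOn.congr (g := (fun t : ℝ => Γ x + (t - d) • w) ∘ id)]
    · refine this.trans ?_
      rw [eVariationOn_id_Icc]
      simp
    · intro t ht
      rcases eq_or_lt_of_le ht.1 with h | h
      · rw [← h]; simp [hβ, hΓd]
      · simp [hβ, not_le.2 h]
  have h3 : ENNReal.ofReal L ≤ ENNReal.ofReal ((d - y) + ‖w‖) := by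
    rw [ENNReal.ofReal_add (by linarith) (norm_nonneg _)]
    exact hmin.trans (add_le_add h1 h2)
  have h4 : 0 ≤ (d - y) + ‖w‖ := add_nonneg (by linarith) (norm_nonneg _)
  rw [ENNReal.ofReal_le_ofReal_iff h4] at h3
  linarith

lemma chord_affine {x y : ℝ} (hxy : x < y) (hyL : y ≤ x + L)
    (hE : ∀ t ∈ Ioo x y, t ∉ Ex Γ) :
    ∃ T : E3, ‖T‖ = 1 ∧ ∀ t ∈ Icc x y, Γ t = Γ x + (t - x) • T := by
  have hl : ∀ s t, s ≤ t → ‖Γ t - Γ s‖ ≤ t - s := by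
    intro s t hst
    have := H.lip.dist_le_mul t s
    rw [dist_eq_norm, Real.dist_eq, abs_of_nonneg (by linarith)] at this
    simpa using this
  have h1 := H.chord_norm hxy hyL hE
  have h2 := hl x y hxy.le
  have h12 : ‖Γ y - Γ x‖ = y - x := le_antisymm h2 h1
  have hpos : 0 < y - x := by linarith
  refine ⟨(y - x)⁻¹ • (Γ y - Γ x), ?_, ?_⟩
  · rw [norm_smul, h12, norm_inv, Real.norm_of_nonneg hpos.le, inv_mul_cancel₀ hpos.ne']
  · intro t ht
    have h3 := hl x t ht.1
    have h4 := hl t y ht.2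
    have h5 : ‖Γ y - Γ x‖ ≤ ‖Γ y - Γ t‖ + ‖Γ t - Γ x‖ := by
      have := norm_add_le (Γ y - Γ t) (Γ t - Γ x)
      simpa using this
    have h6 : ‖Γ t - Γ x‖ = t - x := by linarith
    have h7 : ‖Γ y - Γ t‖ = y - t := by linarith
    have := eq_lineMap_of_dist_eq_mul_of_dist_eq_mul (x := Γ x) (y := Γ t) (z := Γ y)
      (r := (t - x) / (y - x))
      (by rw [dist_comm, dist_eq_norm, dist_comm, dist_eq_norm, h6, h12]; field_simp)
      (by rw [dist_comm, dist_eq_norm, dist_comm, dist_eq_norm, h7, h12]; field_simp; ring)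
    rw [this, AffineMap.lineMap_apply]
    simp [smul_smul, div_eq_mul_inv, add_comm]

lemma exists_chord {t : ℝ} (ht : t ∉ Ex Γ) :
    ∃ x y, x ∈ Ex Γ ∧ y ∈ Ex Γ ∧ x < t ∧ t < y ∧ y ≤ x + L ∧ ∀ s ∈ Ioo x y, s ∉ Ex Γ := by
  have hcl := isClosed_Ex H.cont
  obtain ⟨e, he⟩ := H.Ex_nonempty
  obtain ⟨k, hk⟩ := H.exists_rep (t - L) e
  have hke := H.Ex_add k he
  set A := Ex Γ ∩ Iic t
  set B := Ex Γ ∩ Ici t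
  have hA : A.Nonempty := ⟨_, hke, by have := hk.2; simp at this ⊢; linarith⟩
  have hAb : BddAbove A := ⟨t, fun s hs => hs.2⟩
  have hAm : sSup A ∈ A := (hcl.inter isClosed_Iic).csSup_mem hA hAb
  have hxl : t - L < sSup A := lt_of_lt_of_le hk.1 (le_csSup hAb ⟨hke, by
    have := hk.2; simp at this ⊢; linarith⟩)
  have hxE : sSup A + L ∈ Ex Γ := by have := H.Ex_add 1 hAm.1; simpa using this
  have hBel : sSup A + L ∈ B := ⟨hxE, by simp; linarith⟩
  have hBb : BddBelow B := ⟨t, fun s hs => hs.2⟩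
  have hBm : sInf B ∈ B := (hcl.inter isClosed_Ici).csInf_mem ⟨_, hBel⟩ hBb
  refine ⟨sSup A, sInf B, hAm.1, hBm.1, lt_of_le_of_ne hAm.2 ?_, lt_of_le_of_ne hBm.2 ?_,
    csInf_le hBb hBel, ?_⟩
  · intro h; exact ht (h ▸ hAm.1)
  · intro h; exact ht (h ▸ hBm.1)
  · intro s hs hsE
    rcases le_total s t with h | h
    · exact absurd (le_csSup hAb ⟨hsE, h⟩) (not_le.2 hs.1)
    · exact absurd (csInf_le hBb ⟨hsE, h⟩) (not_le.2 hs.2)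

omit H in
lemma norm_sq_decomp {u T : E3} (hT : ‖T‖ = 1) :
    ‖u - ⟪u, T⟫ • T‖ ^ 2 = ‖u‖ ^ 2 - ⟪u, T⟫ ^ 2 := by
  rw [norm_sub_sq_real, inner_smul_right, norm_smul, hT]
  simp; ring

lemma chord_sign {x y : ℝ} (hxy : x < y) (hx : x ∈ Ex Γ) (hy : y ∈ Ex Γ) {T : E3} (hT : ‖T‖ = 1)
    (haff : ∀ t ∈ Icc x y, Γ t = Γ x + (t - x) • T)
    (hδ : ‖Γ x‖ ^ 2 - ⟪Γ x, T⟫ ^ 2 < 1) :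
    ⟪Γ x, T⟫ < 0 ∧ 0 < ⟪Γ x, T⟫ + (y - x) := by
  have hyy := haff y ⟨hxy.le, le_rfl⟩
  set h := ⟪Γ x, T⟫ with hh
  set f : E3 := Γ x - h • T with hf
  have hfn : ‖f‖ < 1 := by
    have := norm_sq_decomp (u := Γ x) hT
    rw [← hh, ← hf] at this
    nlinarith [norm_nonneg f]
  have hfi : ∀ n : E3, ‖n‖ = 1 → ⟪n, f⟫ < 1 := by
    intro n hn
    have := real_inner_le_norm n f
    rw [hn] at this; linarith
  obtain ⟨n, hn, hmn⟩ := hx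
  obtain ⟨m, hm, hmm⟩ := hy
  have a1 := H.Ex_le hn hmn
  have b1 := H.Ex_le hm hmm
  have a2 := hmn y
  have b2 := hmm x
  have a3 := hfi n hn
  have b3 := hfi m hm
  rw [hyy] at a2 b1 b2
  simp only [hf, inner_add_right, inner_sub_right, inner_smul_right] at *
  have hp : 0 < y - x := by linarith
  constructor
  · have : ⟪n, T⟫ ≤ 0 := by
      by_contra hc
      have := mul_pos hp (not_le.1 hc)
      linarith
    by_contra hc
    nlinarith
  · have : 0 ≤ ⟪m, T⟫ := by
      by_contra hc
      have := mul_neg_of_pos_of_neg hp (not_le.1 hc)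
      linarith
    by_contra hc
    nlinarith

lemma Ex_deriv {t : ℝ} {n v : E3} (hmn : ∀ s, ⟪n, Γ s⟫ ≤ ⟪n, Γ t⟫)
    (hv : HasDerivAt Γ v t) : ⟪n, v⟫ = 0 := by
  have h1 := hasDerivAt_inner_const hv n
  have : IsLocalMax (fun t => ⟪n, Γ t⟫) t := Filter.Eventually.of_forall hmn
  exact this.hasDerivAt_eq_zero h1

lemma Ex_pointwise {t : ℝ} {v : E3} (ht : t ∈ Ex Γ) (hv : HasDerivAt Γ v t) (hv1 : ‖v‖ ≤ 1) :
    ⟪Γ t, v⟫ ^ 2 ≤ ‖Γ t‖ ^ 2 - 1 := by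
  obtain ⟨n, hn, hmn⟩ := ht
  have h0 := H.Ex_deriv hmn hv
  have h1 := H.Ex_le hn hmn
  have h2 := norm_sq_decomp (u := Γ t) hn
  have h3 : ⟪Γ t, v⟫ = ⟪Γ t - ⟪Γ t, n⟫ • n, v⟫ := by
    rw [inner_sub_left, inner_smul_left, h0]; simp
  have h4 := abs_real_inner_le_norm (Γ t - ⟪Γ t, n⟫ • n) v
  rw [← h3] at h4
  have h5 : |⟪Γ t, v⟫| ≤ ‖Γ t - ⟪Γ t, n⟫ • n‖ :=
    h4.trans (mul_le_of_le_one_right (norm_nonneg _) hv1)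
  have h6 : ⟪Γ t, v⟫ ^ 2 ≤ ‖Γ t - ⟪Γ t, n⟫ • n‖ ^ 2 := sq_le_sq' (by linarith [abs_le.1 h5])
    (abs_le.1 h5).2
  rw [h2, real_inner_comm n] at h6
  nlinarith

end NC

/-- weight profile -/
def PP (f : ℝ) : ℝ := 3/8 * (max 0 (9/4 - f))^3
/-- its derivative -/
def PPd (f : ℝ) : ℝ := -(9/8) * (max 0 (9/4 - f))^2

lemma hasDerivAt_max_cube (x : ℝ) : HasDerivAt (fun x : ℝ => (max 0 x)^3) (3 * (max 0 x)^2) x := by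
  have hl : ∀ x ≤ (0:ℝ), HasDerivWithinAt (fun x : ℝ => (max 0 x)^3) (3 * (max 0 x)^2) (Iic 0) x := by
    intro x hx
    have : HasDerivWithinAt (fun _ : ℝ => (0:ℝ)) 0 (Iic 0) x := hasDerivWithinAt_const _ _ _
    have h2 := this.congr (f₁ := fun x : ℝ => (max 0 x)^3)
      (fun y hy => by simp [max_eq_left (show y ≤ 0 from hy)]) (by simp [max_eq_left hx])
    simpa [max_eq_left hx] using h2
  have hr : ∀ x, (0:ℝ) ≤ x → HasDerivWithinAt (fun x : ℝ => (max 0 x)^3) (3 * (max 0 x)^2) (Ici 0) x := by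
    intro x hx
    have : HasDerivWithinAt (fun x : ℝ => x^3) (3 * x^2) (Ici 0) x := by
      simpa using (hasDerivAt_pow 3 x).hasDerivWithinAt
    have h2 := this.congr (f₁ := fun x : ℝ => (max 0 x)^3)
      (fun y hy => by simp [max_eq_right (show (0:ℝ) ≤ y from hy)]) (by simp [max_eq_right hx])
    simpa [max_eq_right hx] using h2
  rcases lt_trichotomy x 0 with h | h | h
  · exact (hl x h.le).hasDerivAt (Iic_mem_nhds h)
  · subst h
    have := (hl 0 le_rfl).union (hr 0 le_rfl)
    rwa [Iic_union_Ici, hasDerivWithinAt_univ] at this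
  · exact (hr x h.le).hasDerivAt (Ici_mem_nhds h)

lemma hasDerivAt_PP (f : ℝ) : HasDerivAt PP (PPd f) f := by
  have h1 := (hasDerivAt_max_cube (9/4 - f)).comp f ((hasDerivAt_id f).const_sub (9/4))
  have h2 := h1.const_mul (3/8)
  have h3 : HasDerivAt PP (3/8 * (3 * (max 0 (9/4 - f))^2 * (-1))) f := h2
  refine h3.congr_deriv ?_
  unfold PPd; ring

lemma continuous_PPd : Continuous PPd := by unfold PPd; fun_prop
lemma continuous_PP : Continuous PP := by unfold PP; fun_prop

lemma contDiff_PP : ContDiff ℝ 1 PP := by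
  rw [contDiff_one_iff_deriv]
  refine ⟨fun x => (hasDerivAt_PP x).differentiableAt, ?_⟩
  have : deriv PP = PPd := funext fun x => (hasDerivAt_PP x).deriv
  rw [this]; exact continuous_PPd

lemma PP_nonneg (f : ℝ) : 0 ≤ PP f := by unfold PP; positivity
lemma PPd_nonpos (f : ℝ) : PPd f ≤ 0 := by
  unfold PPd; nlinarith [sq_nonneg (max 0 (9/4 - f))]
lemma PP_le {f : ℝ} (hf : 0 ≤ f) : PP f ≤ 5 := by
  unfold PP
  have h1 : max 0 (9/4 - f) ≤ 9/4 := by apply max_le <;> linarith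
  have h0 : 0 ≤ max 0 (9/4 - f) := le_max_left _ _
  have := pow_le_pow_left₀ h0 h1 3
  linarith

/-- radial vector field -/
def VV (x : E3) : E3 := PP (‖x‖^2) • x

lemma VV_lip : ∃ K : ℝ≥0, LipschitzWith K VV := by
  have h1 : ContDiff ℝ 1 VV := by
    unfold VV
    exact (contDiff_PP.comp (contDiff_norm_sq ℝ)).smul contDiff_id
  have h2 : HasCompactSupport VV := by
    apply HasCompactSupport.intro (isCompact_closedBall (0:E3) 2)
    intro x hx
    have : 2 < ‖x‖ := by simpa using hx
    have h : 9/4 - ‖x‖^2 ≤ 0 := by nlinarith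
    simp [VV, PP, max_eq_left h]
  exact h1.lipschitzWith_of_hasCompactSupport h2 (by norm_num)

lemma hasDerivAt_VV {Γ : ℝ → E3} {t : ℝ} {v : E3} (hv : HasDerivAt Γ v t) :
    HasDerivAt (fun t => VV (Γ t))
      (PP (‖Γ t‖^2) • v + (PPd (‖Γ t‖^2) * (2 * ⟪Γ t, v⟫)) • Γ t) t := by
  have h1 : HasDerivAt (fun t => ‖Γ t‖^2) (2 * ⟪Γ t, v⟫) t := hv.norm_sq
  have h2 := (hasDerivAt_PP (‖Γ t‖^2)).comp t h1
  exact h2.smul hv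

namespace NC
variable {Γ : ℝ → E3} {L σ : ℝ} (H : NC Γ L σ)
include H

lemma norm_deriv_le (t : ℝ) : ‖deriv Γ t‖ ≤ 1 := by
  simpa using norm_deriv_le_lip H.lip t

lemma sup_Icc (n : E3) (s0 : ℝ) : ∃ s ∈ Icc s0 (s0 + L), σ * ‖n‖ ≤ ⟪n, Γ s⟫ := by
  obtain ⟨s, hs⟩ := H.sup n
  obtain ⟨k, hk⟩ := H.exists_rep s0 s
  exact ⟨_, ⟨hk.1.le, hk.2⟩, by rwa [H.per_int]⟩

lemma L_le_integral {β : ℝ → E3} {K : ℝ≥0} (hβ : LipschitzWith K β) (s0 : ℝ)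
    (hcl : β s0 = β (s0 + L))
    (hsup : ∀ n : E3, ∃ s ∈ Icc s0 (s0 + L), σ * ‖n‖ ≤ ⟪n, β s⟫) :
    L ≤ ∫ t in s0..s0 + L, ‖deriv β t‖ := by
  have hL := H.Lpos
  have h1 := H.min s0 (s0 + L) β (by linarith) hβ.continuous.continuousOn hcl hsup
  have h2 := h1.trans (eVar_le_integral hβ (by linarith))
  rwa [ENNReal.ofReal_le_ofReal_iff] at h2
  exact intervalIntegral.integral_nonneg (by linarith) (fun _ _ => norm_nonneg _)

lemma unit_speed (s0 : ℝ) : ∀ᵐ t ∂(volume.restrict (Ioc s0 (s0 + L))), ‖deriv Γ t‖ = 1 := by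
  have hL := H.Lpos
  have h1 := H.L_le_integral H.lip s0 (H.per s0).symm (fun n => H.sup_Icc n s0)
  have hI : ∀ a b, IntervalIntegrable (fun x => ‖deriv Γ x‖) volume a b :=
    intervalIntegrable_of_bdd (M := 1) (measurable_deriv Γ).norm
      (fun t => by rw [abs_norm]; exact H.norm_deriv_le t)
  have h2 : ∫ t in s0..s0 + L, (1 - ‖deriv Γ t‖) = 0 := by
    apply le_antisymm
    · rw [intervalIntegral.integral_sub (by simp) (hI _ _)]
      simp; linarith
    · exact intervalIntegral.integral_nonneg (by linarith)
        (fun t _ => by have := H.norm_deriv_le t; linarith)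
  rw [intervalIntegral.integral_of_le (by linarith), setIntegral_eq_zero_iff_of_nonneg_ae] at h2
  · filter_upwards [h2] with t ht
    simp at ht; linarith
  · exact Filter.Eventually.of_forall fun t => by
      have := H.norm_deriv_le t; simp; linarith
  · have := (intervalIntegrable_const (c := (1:ℝ)) (μ := volume) (a := s0) (b := s0 + L)).sub (hI s0 (s0+L))
    rwa [intervalIntegrable_iff_integrableOn_Ioc_of_le (by linarith)] at this

lemma first_var (s0 : ℝ) : 0 ≤ ∫ t in s0..s0 + L,
    (PP (‖Γ t‖^2) + 2 * PPd (‖Γ t‖^2) * ⟪Γ t, deriv Γ t⟫^2) := by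
  have hL := H.Lpos
  obtain ⟨K, hK⟩ := VV_lip
  set V : ℝ → E3 := fun t => VV (Γ t) with hV
  have hVl : LipschitzWith (K * 1) V := hK.comp H.lip
  have hVn : ∀ t, ‖deriv V t‖ ≤ K := fun t => by simpa using norm_deriv_le_lip hVl t
  have hmΓ : Measurable (deriv Γ) := measurable_deriv Γ
  have hmV : Measurable (deriv V) := measurable_deriv V
  have hin : ∀ t, |⟪deriv Γ t, deriv V t⟫| ≤ K := fun t =>
    (abs_real_inner_le_norm _ _).trans (by
      have := mul_le_mul (H.norm_deriv_le t) (hVn t) (norm_nonneg _) zero_le_one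
      simpa using this)
  have hmi : Measurable (fun t => ⟪deriv Γ t, deriv V t⟫) := hmΓ.inner hmV
  have hIi := intervalIntegrable_of_bdd hmi hin s0 (s0 + L)
  set I := ∫ t in s0..s0 + L, ⟪deriv Γ t, deriv V t⟫ with hI
  have key : ∀ ε : ℝ, 0 < ε → 0 ≤ I + ε * (K^2 * L / 2) := by
    intro ε hε
    have hβ : LipschitzWith (1 + ⟨ε, hε.le⟩ * (K * 1)) (fun t => Γ t + ε • V t) := by
      refine H.lip.add ?_
      have : LipschitzWith ⟨ε, hε.le⟩ (fun x : E3 => ε • x) := by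
        refine LipschitzWith.of_dist_le_mul fun x y => ?_
        rw [dist_smul₀, Real.norm_of_nonneg hε.le]; rfl
      exact this.comp hVl
    have h1 := H.L_le_integral hβ s0 (by simp only [hV, H.per s0]) (by
      intro n
      obtain ⟨s, hs, hn⟩ := H.sup_Icc n s0
      refine ⟨s, hs, ?_⟩
      simp only [hV, VV, inner_add_right, inner_smul_right]
      have h0 : 0 ≤ ⟪n, Γ s⟫ := le_trans (mul_nonneg (by linarith [H.sig]) (norm_nonneg _)) hn
      have := mul_nonneg hε.le (mul_nonneg (PP_nonneg (‖Γ s‖^2)) h0)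
      linarith)
    have h2 : ∫ t in s0..s0 + L, ‖deriv (fun t => Γ t + ε • V t) t‖ ≤
        ∫ t in s0..s0 + L, ((1 + ε^2*K^2/2) + ε * ⟪deriv Γ t, deriv V t⟫) := by
      refine intervalIntegral.integral_mono_ae (by linarith) ?_ ?_ ?_
      · exact intervalIntegrable_of_bdd (measurable_deriv _).norm
          (fun t => by rw [abs_norm]; exact norm_deriv_le_lip hβ t) _ _
      · exact intervalIntegrable_const.add (hIi.const_mul _)
      · filter_upwards [H.lip.ae_differentiableAt_real, hVl.ae_differentiableAt_real] with t h3 h4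
        have h5 : deriv (fun t => Γ t + ε • V t) t = deriv Γ t + ε • deriv V t :=
          (h3.hasDerivAt.add (h4.hasDerivAt.const_smul ε)).deriv
        rw [h5]
        have h6 := norm_add_sq_real (deriv Γ t) (ε • deriv V t)
        rw [inner_smul_right, norm_smul, Real.norm_of_nonneg hε.le] at h6
        have h7 := H.norm_deriv_le t
        have h8 := hVn t
        have h9 : ‖deriv Γ t‖^2 ≤ 1 := pow_le_one₀ (norm_nonneg _) h7
        have h10 : (ε * ‖deriv V t‖)^2 ≤ (ε * K)^2 := by gcongr
        nlinarith [sq_nonneg (‖deriv Γ t + ε • deriv V t‖ - 1)]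
    rw [intervalIntegral.integral_add intervalIntegrable_const (hIi.const_mul _),
      intervalIntegral.integral_const_mul] at h2
    simp only [intervalIntegral.integral_const, add_sub_cancel_left, smul_eq_mul] at h2
    rw [← hI] at h2
    have h3 : 0 ≤ ε * (I + ε * (K^2 * L / 2)) := by nlinarith
    exact nonneg_of_mul_nonneg_right h3 hε
  have hI0 : 0 ≤ I := by
    by_contra hneg
    have hK2 : 0 ≤ (K:ℝ)^2 * L / 2 := by positivity
    have := key (-I / (K^2 * L + 1)) (div_pos (by linarith) (by positivity))
    have h1 : -I / (K^2 * L + 1) * (K^2 * L / 2) ≤ -I / 2 := by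
      rw [div_mul_eq_mul_div, div_le_iff₀ (by positivity)]
      nlinarith
    linarith
  refine hI0.trans ?_
  rw [hI]
  refine intervalIntegral.integral_mono_ae (by linarith) hIi ?_ ?_
  · have hc := H.cont
    obtain ⟨M, hM⟩ : ∃ M, ∀ t, ‖Γ t‖ ≤ M := by
      obtain ⟨M, hM⟩ := (isCompact_Icc (a := (0:ℝ)) (b := L)).exists_bound_of_continuousOn
        hc.continuousOn
      refine ⟨M, fun t => ?_⟩
      obtain ⟨t', ht', he⟩ := H.per.exists_mem_Ico₀ H.Lpos t
      rw [he]; exact hM _ ⟨ht'.1, ht'.2.le⟩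
    apply intervalIntegrable_of_bdd (M := 5 + 2 * 6 * M^2)
    · have h1 : Measurable (fun t => ⟪Γ t, deriv Γ t⟫) := hc.measurable.inner hmΓ
      have h2 : Measurable (fun t => PP (‖Γ t‖^2)) := (continuous_PP.comp (by fun_prop)).measurable
      have h3 : Measurable (fun t => PPd (‖Γ t‖^2)) := (continuous_PPd.comp (by fun_prop)).measurable
      fun_prop
    · intro t
      have h1 : |⟪Γ t, deriv Γ t⟫| ≤ M := (abs_real_inner_le_norm _ _).trans (by
        have := mul_le_mul (hM t) (H.norm_deriv_le t) (norm_nonneg _) ((norm_nonneg _).trans (hM t))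
        simpa using this)
      have h2 : ⟪Γ t, deriv Γ t⟫^2 ≤ M^2 := by rw [← sq_abs]; gcongr
      have h3 := PP_nonneg (‖Γ t‖^2)
      have h4 := PP_le (f := ‖Γ t‖^2) (by positivity)
      have h5 := PPd_nonpos (‖Γ t‖^2)
      have h6 : -6 ≤ PPd (‖Γ t‖^2) := by
        unfold PPd
        have h1 : max 0 (9/4 - ‖Γ t‖^2) ≤ 9/4 := by
          apply max_le
          · norm_num
          · nlinarith [sq_nonneg ‖Γ t‖]
        have h0 : 0 ≤ max 0 (9/4 - ‖Γ t‖^2) := le_max_left _ _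
        have := pow_le_pow_left₀ h0 h1 2
        linarith
      have h7 : 0 ≤ ⟪Γ t, deriv Γ t⟫^2 := sq_nonneg _
      have h8 : (-PPd (‖Γ t‖^2)) * ⟪Γ t, deriv Γ t⟫^2 ≤ 6 * M^2 :=
        mul_le_mul (by linarith) h2 h7 (by norm_num)
      have h9 : 0 ≤ (-PPd (‖Γ t‖^2)) * ⟪Γ t, deriv Γ t⟫^2 := mul_nonneg (by linarith) h7
      rw [abs_le]; constructor <;> nlinarith
  · filter_upwards [H.lip.ae_differentiableAt_real] with t ht
    have h1 := (hasDerivAt_VV ht.hasDerivAt).deriv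
    change ⟪deriv Γ t, deriv (fun t => VV (Γ t)) t⟫ ≤ _
    rw [h1, inner_add_right, inner_smul_right, inner_smul_right, real_inner_self_eq_norm_sq,
      real_inner_comm (Γ t) (deriv Γ t)]
    have h9 : ‖deriv Γ t‖^2 ≤ 1 := pow_le_one₀ (norm_nonneg _) (H.norm_deriv_le t)
    have := mul_le_mul_of_nonneg_left h9 (PP_nonneg (‖Γ t‖^2))
    nlinarith

end NC

/-- smoothing parameter -/
def tau : ℝ := 1001/1000
/-- bump -/
def pp (s : ℝ) : ℝ := max 0 ((s - tau) * (tau^2 - s))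
/-- primitive of the bump -/
def chi (s : ℝ) : ℝ := ∫ x in (0:ℝ)..s, pp x
/-- total mass of the bump -/
def I0 : ℝ := chi (tau^2)

lemma continuous_pp : Continuous pp := by unfold pp; fun_prop
lemma pp_nonneg (s : ℝ) : 0 ≤ pp s := le_max_left _ _
lemma pp_eq_zero {s : ℝ} (h : s ≤ tau ∨ tau^2 ≤ s) : pp s = 0 := by
  have ht : tau ≤ tau^2 := by norm_num [tau]
  unfold pp
  apply max_eq_left
  rcases h with h | h
  · nlinarith
  · nlinarith
lemma pp_le_one (s : ℝ) : pp s ≤ 1 := by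
  unfold pp
  apply max_le zero_le_one
  unfold tau
  nlinarith [sq_nonneg (s - 1001/1000 + s - (1001/1000)^2)]
lemma pp_int (a b : ℝ) : IntervalIntegrable pp volume a b := continuous_pp.intervalIntegrable _ _

lemma hasDerivAt_chi (s : ℝ) : HasDerivAt chi (pp s) s :=
  intervalIntegral.integral_hasDerivAt_right (pp_int _ _)
    continuous_pp.stronglyMeasurable.stronglyMeasurableAtFilter continuous_pp.continuousAt

lemma chi_sub (a b : ℝ) : chi b - chi a = ∫ x in a..b, pp x :=
  intervalIntegral.integral_interval_sub_left (pp_int _ _) (pp_int _ _)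

lemma chi_mono : Monotone chi := by
  intro a b hab
  have := chi_sub a b
  have h2 := intervalIntegral.integral_nonneg (μ := volume) hab (fun x _ => pp_nonneg x)
  linarith

lemma chi_low {s : ℝ} (h : s ≤ tau) : chi s = 0 := by
  unfold chi
  rw [intervalIntegral.integral_congr (g := fun _ => (0:ℝ))]
  · simp
  · intro x hx
    apply pp_eq_zero; left
    have : x ≤ max 0 s := hx.2
    refine this.trans (max_le (by norm_num [tau]) h)

lemma chi_high {s : ℝ} (h : tau^2 ≤ s) : chi s = I0 := by
  have := chi_sub (tau^2) s
  rw [intervalIntegral.integral_congr (g := fun _ => (0:ℝ))] at this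
  · simp at this; unfold I0; linarith
  · intro x hx
    apply pp_eq_zero; right
    rw [uIcc_of_le h] at hx
    exact hx.1

lemma chi_nonneg (s : ℝ) : 0 ≤ chi s := by
  rcases le_total s tau with h | h
  · rw [chi_low h]
  · rw [← chi_low le_rfl]; exact chi_mono h

lemma chi_le (s : ℝ) : chi s ≤ I0 := by
  rcases le_total s (tau^2) with h | h
  · exact chi_mono h
  · rw [chi_high h]

lemma I0_pos : 0 < I0 := by
  have h := chi_sub tau (tau^2)
  rw [chi_low le_rfl] at h
  have ht : tau < tau^2 := by norm_num [tau]
  have : 0 < ∫ x in tau..tau^2, pp x := by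
    apply intervalIntegral.intervalIntegral_pos_of_pos_on (pp_int _ _) _ ht
    intro x hx
    have : 0 < (x - tau) * (tau^2 - x) := mul_pos (by linarith [hx.1]) (by linarith [hx.2])
    exact lt_of_lt_of_le this (le_max_right _ _)
  unfold I0; linarith

lemma lip_chi : LipschitzWith 1 chi := by
  apply lipschitzWith_of_nnnorm_deriv_le (fun x => (hasDerivAt_chi x).differentiableAt)
  intro x
  rw [(hasDerivAt_chi x).deriv]
  have : ‖pp x‖ ≤ 1 := by rw [Real.norm_of_nonneg (pp_nonneg x)]; exact pp_le_one x
  exact_mod_cast this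

lemma integral_pp_univ : ∫ x, pp x = I0 := by
  have ht : tau ≤ tau^2 := by norm_num [tau]
  have h := chi_sub tau (tau^2)
  rw [chi_low le_rfl, sub_zero, intervalIntegral.integral_of_le ht] at h
  rw [show I0 = chi (tau^2) from rfl, h]
  symm
  apply setIntegral_eq_integral_of_forall_compl_eq_zero
  intro x hx
  apply pp_eq_zero
  by_contra hc
  push Not at hc
  exact hx ⟨hc.1, hc.2.le⟩

/-- crossing density -/
def FF (Γ : ℝ → E3) (t : ℝ) (x : E3) : ℝ := pp ⟪Γ t, x⟫ * |⟪deriv Γ t, x⟫|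

/-- shell -/
def Sh : Set E3 := {x | 1 ≤ ‖x‖ ∧ ‖x‖ ≤ tau}

lemma measurable_FF {Γ : ℝ → E3} (hc : Continuous Γ) :
    Measurable (fun z : ℝ × E3 => FF Γ z.1 z.2) := by
  have hm : Measurable (deriv Γ) := measurable_deriv Γ
  have h1 : Measurable (fun z : ℝ × E3 => ⟪Γ z.1, z.2⟫) :=
    (hc.measurable.comp measurable_fst).inner measurable_snd
  have h2 : Measurable (fun z : ℝ × E3 => ⟪deriv Γ z.1, z.2⟫) :=
    (hm.comp measurable_fst).inner measurable_snd
  exact (continuous_pp.measurable.comp h1).mul h2.abs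

lemma FF_nonneg (Γ : ℝ → E3) (t : ℝ) (x : E3) : 0 ≤ FF Γ t x :=
  mul_nonneg (pp_nonneg _) (abs_nonneg _)

lemma FF_le {Γ : ℝ → E3} (hl : LipschitzWith 1 Γ) (t : ℝ) (x : E3) : FF Γ t x ≤ ‖x‖ := by
  unfold FF
  have h1 : ‖deriv Γ t‖ ≤ 1 := by simpa using norm_deriv_le_lip hl t
  have h2 : |⟪deriv Γ t, x⟫| ≤ ‖x‖ := (abs_real_inner_le_norm _ _).trans
    (mul_le_of_le_one_left (norm_nonneg _) h1)
  calc _ ≤ 1 * |⟪deriv Γ t, x⟫| := by gcongr; exact pp_le_one _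
    _ ≤ _ := by rwa [one_mul]

lemma Sh_meas : MeasurableSet Sh :=
  (measurableSet_le measurable_const measurable_norm).inter
    (measurableSet_le measurable_norm measurable_const)

lemma Sh_fin : volume Sh ≠ ⊤ := by
  apply ne_of_lt
  apply lt_of_le_of_lt (measure_mono (t := Metric.closedBall (0:E3) tau) _)
  · exact measure_closedBall_lt_top
  · intro x hx
    simpa using hx.2

lemma FF_int {Γ : ℝ → E3} (hl : LipschitzWith 1 Γ) (x : E3) (a b : ℝ) :
    IntervalIntegrable (fun t => FF Γ t x) volume a b :=
  intervalIntegrable_of_bdd (M := ‖x‖)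
    ((measurable_FF hl.continuous).comp (measurable_id.prodMk measurable_const))
    (fun t => by
      change |FF Γ t x| ≤ _
      rw [abs_of_nonneg (FF_nonneg _ _ _)]; exact FF_le hl t x) a b

lemma chi_var_le {Γ : ℝ → E3} (hl : LipschitzWith 1 Γ) (x : E3) {a b : ℝ} (hab : a ≤ b) :
    |chi ⟪Γ b, x⟫ - chi ⟪Γ a, x⟫| ≤ ∫ t in a..b, FF Γ t x := by
  have hl1 := lip_chi.comp (lip_inner hl x)
  have h1 := lip_ftc hl1 a b
  simp only [Function.comp] at h1
  rw [real_inner_comm, real_inner_comm x (Γ a), ← h1]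
  refine (intervalIntegral.abs_integral_le_integral_abs hab).trans (le_of_eq ?_)
  apply intervalIntegral.integral_congr_ae
  filter_upwards [hl.ae_differentiableAt_real] with t ht _
  have h2 := hasDerivAt_inner_const ht.hasDerivAt x
  have h3 := ((hasDerivAt_chi ⟪x, Γ t⟫).comp t h2).deriv
  change |deriv (chi ∘ (fun t => ⟪x, Γ t⟫)) t| = _
  rw [h3, abs_mul, abs_of_nonneg (pp_nonneg _), FF, real_inner_comm, real_inner_comm x (deriv Γ t)]

/-- on an affine piece the crossing integral is exactly a difference of `chi`. -/
lemma chi_affine {Γ : ℝ → E3} {x : E3} {T : E3} {a b : ℝ} (hab : a ≤ b)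
    (hT : ∀ t ∈ Ioo a b, HasDerivAt Γ T t) (hc : ContinuousOn Γ (Icc a b)) :
    ∫ t in a..b, FF Γ t x = |chi ⟪Γ b, x⟫ - chi ⟪Γ a, x⟫| := by
  have hg : ContinuousOn (fun t => ⟪Γ t, x⟫) (Icc a b) := hc.inner continuousOn_const
  have hchi : Continuous chi := lip_chi.continuous
  have key : ∫ t in a..b, pp ⟪Γ t, x⟫ * ⟪T, x⟫ = chi ⟪Γ b, x⟫ - chi ⟪Γ a, x⟫ := by
    apply intervalIntegral.integral_eq_sub_of_hasDerivAt_of_le hab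
      (f := fun t => chi ⟪Γ t, x⟫)
    · exact hchi.comp_continuousOn hg
    · intro t ht
      have h2 := (hT t ht).inner ℝ (hasDerivAt_const t x)
      simp only [inner_zero_right, zero_add] at h2
      exact (hasDerivAt_chi ⟪Γ t, x⟫).comp t h2
    · apply ContinuousOn.intervalIntegrable_of_Icc hab
      exact (continuous_pp.comp_continuousOn hg).mul continuousOn_const
  have h2 : ∫ t in a..b, FF Γ t x = ∫ t in a..b, pp ⟪Γ t, x⟫ * |⟪T, x⟫| := by
    apply intervalIntegral.integral_congr_ae
    have : ∀ᵐ t : ℝ, t ≠ b := by simp [ae_iff]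
    filter_upwards [this] with t htb ht
    rw [uIoc_of_le hab] at ht
    simp only [FF, (hT t ⟨ht.1, lt_of_le_of_ne ht.2 htb⟩).deriv]
  rw [h2, intervalIntegral.integral_mul_const, ← key, intervalIntegral.integral_mul_const, abs_mul,
    abs_of_nonneg (intervalIntegral.integral_nonneg hab (fun _ _ => pp_nonneg _))]

/-- total crossing density -/
def RR (Γ : ℝ → E3) (t : ℝ) : ℝ := ∫ x in Sh, FF Γ t x

lemma FF_prod_int {Γ : ℝ → E3} (hl : LipschitzWith 1 Γ) (a b : ℝ) :
    Integrable (fun z : ℝ × E3 => FF Γ z.1 z.2)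
      ((volume.restrict (Ioc a b)).prod (volume.restrict Sh)) := by
  have : IsFiniteMeasure (volume.restrict Sh) := ⟨by simpa using lt_top_iff_ne_top.2 Sh_fin⟩
  have h2 : IsFiniteMeasure ((volume.restrict (Ioc a b)).prod (volume.restrict Sh)) := inferInstance
  rw [Measure.prod_restrict] at *
  refine Measure.integrableOn_of_bounded (M := tau) ?_
    (measurable_FF hl.continuous).aestronglyMeasurable ?_
  · have := h2.measure_univ_lt_top
    rw [Measure.restrict_apply_univ] at this
    exact this.ne
  · filter_upwards [ae_restrict_mem (measurableSet_Ioc.prod Sh_meas)] with z hz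
    rw [Real.norm_of_nonneg (FF_nonneg _ _ _)]
    exact (FF_le hl _ _).trans hz.2.2

lemma RR_int {Γ : ℝ → E3} (hl : LipschitzWith 1 Γ) (a b : ℝ) : IntegrableOn (RR Γ) (Ioc a b) :=
  (FF_prod_int hl a b).integral_prod_left

lemma RR_swap {Γ : ℝ → E3} (hl : LipschitzWith 1 Γ) {a b : ℝ} (hab : a ≤ b) :
    ∫ t in a..b, RR Γ t = ∫ x in Sh, ∫ t in a..b, FF Γ t x := by
  simp only [intervalIntegral.integral_of_le hab, RR]
  exact integral_integral_swap (FF_prod_int hl a b)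

lemma FFx_int {Γ : ℝ → E3} (hl : LipschitzWith 1 Γ) {a b : ℝ} (hab : a ≤ b) :
    IntegrableOn (fun x => ∫ t in a..b, FF Γ t x) Sh := by
  simp only [intervalIntegral.integral_of_le hab]
  exact (FF_prod_int hl a b).integral_prod_right

namespace NC
variable {Γ : ℝ → E3} {L σ : ℝ} (H : NC Γ L σ)
include H

lemma deriv_per : Function.Periodic (deriv Γ) L := by
  intro t
  have : (fun t => Γ (t + L)) = Γ := funext H.per
  rw [← deriv_comp_add_const, this]

lemma cover_x (hσ : tau^2 ≤ σ) {t0 : ℝ} (h0 : Γ t0 = 0) (s0 : ℝ) {x : E3} (hx : 1 ≤ ‖x‖) :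
    2 * I0 ≤ ∫ t in s0..s0 + L, FF Γ t x := by
  have hper : Function.Periodic (fun t => FF Γ t x) L := by
    intro t; simp only [FF, H.per t, H.deriv_per t]
  rw [hper.intervalIntegral_add_eq s0 t0]
  obtain ⟨t1, ht1, hs⟩ := H.sup_Icc x t0
  have h1 := chi_var_le H.lip x ht1.1
  have h2 := chi_var_le H.lip x ht1.2
  have h3 : chi ⟪Γ t1, x⟫ = I0 := by
    apply chi_high
    rw [real_inner_comm]
    nlinarith [sq_nonneg tau]
  have ht : (0:ℝ) ≤ tau := by norm_num [tau]
  rw [h3, h0, inner_zero_left, chi_low ht, sub_zero, abs_of_pos I0_pos] at h1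
  rw [h3, H.per t0, h0, inner_zero_left, chi_low ht, zero_sub, abs_neg, abs_of_pos I0_pos] at h2
  rw [← intervalIntegral.integral_add_adjacent_intervals (FF_int H.lip x t0 t1)
    (FF_int H.lip x t1 (t0 + L))]
  linarith

lemma cover (hσ : tau^2 ≤ σ) {t0 : ℝ} (h0 : Γ t0 = 0) (s0 : ℝ) :
    2 * I0 * volume.real Sh ≤ ∫ t in s0..s0 + L, RR Γ t := by
  have hL := H.Lpos
  rw [RR_swap H.lip (by linarith)]
  have : ∫ _ in Sh, (2 * I0) ≤ ∫ x in Sh, ∫ t in s0..s0 + L, FF Γ t x := by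
    apply setIntegral_mono_on _ (FFx_int H.lip (by linarith)) Sh_meas
    · intro x hx
      exact H.cover_x hσ h0 s0 hx.1
    · exact integrableOn_const Sh_fin
  rw [setIntegral_const, smul_eq_mul] at this
  linarith

end NC

/-- angular integral -/
def JJ (A B : ℝ) : ℝ := ∫ φ in (-π)..π, max A (B * |cos φ|)

lemma JJ_int (A B a b : ℝ) : IntervalIntegrable (fun φ => max A (B * |cos φ|)) volume a b :=
  Continuous.intervalIntegrable (by fun_prop) _ _

lemma JJ_mono {A B A' B' : ℝ} (hA : A ≤ A') (hB : B ≤ B') : JJ A B ≤ JJ A' B' := by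
  apply intervalIntegral.integral_mono (by linarith [pi_pos]) (JJ_int _ _ _ _) (JJ_int _ _ _ _)
  intro φ
  exact max_le_max hA (mul_le_mul_of_nonneg_right hB (abs_nonneg _))

lemma JJ_nonneg {A B : ℝ} (hA : 0 ≤ A) : 0 ≤ JJ A B :=
  intervalIntegral.integral_nonneg (by linarith [pi_pos]) (fun φ _ => hA.trans (le_max_left _ _))

lemma JJ_smul {k : ℝ} (hk : 0 ≤ k) (A B : ℝ) : JJ (k * A) (k * B) = k * JJ A B := by
  unfold JJ
  rw [← intervalIntegral.integral_const_mul]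
  congr 1; ext φ
  rw [mul_max_of_nonneg _ _ hk, mul_assoc]

lemma abs_integral_eq (α β : ℝ) :
    ∫ φ in (-π)..π, |α + β * cos φ| = ∫ φ in (-π)..π, max |α| (|β| * |cos φ|) := by
  have hi : ∀ β a b, IntervalIntegrable (fun φ => |α + β * cos φ|) volume a b :=
    fun β a b => Continuous.intervalIntegrable (by fun_prop) _ _
  have hper : Function.Periodic (fun φ => |α + β * cos φ|) (2*π) := by
    intro φ; simp
  have h1 : ∫ φ in (-π)..π, |α + β * cos φ| = ∫ φ in (-π)..π, |α + (-β) * cos φ| := by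
    have h := hper.intervalIntegral_add_eq (-π) 0
    have h2 : ∫ φ in (-π)..π, |α + (-β) * cos φ| = ∫ φ in (0:ℝ)..(2*π), |α + β * cos φ| := by
      have := intervalIntegral.integral_comp_add_right (a := -π) (b := π)
        (fun φ => |α + β * cos φ|) π
      simp only [cos_add_pi] at this
      rw [show -π + π = 0 by ring, show π + π = 2*π by ring] at this
      rw [← this]
      congr 1; ext φ; ring_nf
    rw [h2]
    rw [show -π + 2*π = π by ring, zero_add] at h
    exact h
  have h3 : ∀ u v : ℝ, max |u| |v| = (|u + v| + |u - v|) / 2 := by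
    intro u v
    rcases le_total 0 (u+v) with h | h <;> rcases le_total 0 (u-v) with h' | h' <;>
      rcases le_total 0 u with h1 | h1 <;> rcases le_total 0 v with h2 | h2 <;>
      simp only [abs_of_nonneg, abs_of_nonpos, h, h', h1, h2] <;>
      first
        | (rw [max_eq_left (by linarith)]; linarith)
        | (rw [max_eq_right (by linarith)]; linarith)
  have h4 : ∫ φ in (-π)..π, max |α| (|β| * |cos φ|) =
      ∫ φ in (-π)..π, (1/2) * (|α + β * cos φ| + |α + (-β) * cos φ|) := by
    congr 1; ext φ
    rw [← abs_mul, h3]; ring_nf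
  rw [h4, intervalIntegral.integral_const_mul, intervalIntegral.integral_add (hi _ _ _) (hi _ _ _),
    ← h1]
  ring

lemma lint_abs_le {α β A B : ℝ} (hα : |α| ≤ A) (hβ : |β| ≤ B) :
    ∫⁻ φ in Ioo (-π) π, ENNReal.ofReal |α + β * cos φ| ≤ ENNReal.ofReal (JJ A B) := by
  have hc : Continuous (fun φ => |α + β * cos φ|) := by fun_prop
  have hp : -π ≤ π := by linarith [pi_pos]
  rw [setLIntegral_congr Ioo_ae_eq_Ioc, ← ofReal_integral_eq_lintegral_ofReal,
    ← intervalIntegral.integral_of_le hp, abs_integral_eq]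
  · exact ENNReal.ofReal_le_ofReal (JJ_mono hα hβ)
  · have := hc.intervalIntegrable (μ := volume) (-π) π
    rwa [intervalIntegrable_iff_integrableOn_Ioc_of_le hp] at this
  · exact Filter.Eventually.of_forall fun φ => abs_nonneg _

lemma trig_ineq {θ : ℝ} (h0 : 0 ≤ θ) (h1 : θ ≤ π/2) :
    cos θ + θ * sin θ ≤ 1 + (π/2 - 1) * sin θ ^ 2 := by
  set G : ℝ → ℝ := fun θ => 1 + (π/2 - 1) * sin θ ^ 2 - cos θ - θ * sin θ with hG
  have hd : ∀ t, HasDerivAt G (cos t * ((π - 2) * sin t - t)) t := by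
    intro t
    have h1 := (((hasDerivAt_sin t).pow 2).const_mul (π/2 - 1)).const_add 1
    have h2 := (h1.sub (hasDerivAt_cos t)).sub ((hasDerivAt_id t).mul (hasDerivAt_sin t))
    refine h2.congr_deriv ?_
    simp; ring
  have hcont : Continuous G := by rw [hG]; fun_prop
  have hG0 : G 0 = 0 := by simp [hG]
  have hG1 : G (π/2) = 0 := by simp [hG]
  have hpi : 0 < π := pi_pos
  suffices 0 ≤ G θ by
    simp only [hG] at this; linarith
  rcases eq_or_lt_of_le h0 with h | hpos
  · rw [← h, hG0]
  have hconc := strictConcaveOn_sin_Icc.concaveOn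
  have hcos : ∀ t, 0 ≤ t → t ≤ π/2 → 0 ≤ cos t := fun t ht ht' =>
    cos_nonneg_of_mem_Icc ⟨by linarith, ht'⟩
  have hsc : ∀ s t, 0 ≤ s → s ≤ t → t ≤ π/2 → 0 < t → s / t * sin t ≤ sin s := by
    intro s t hs hst ht htp
    have := hconc.2 (show (0:ℝ) ∈ Icc 0 π from ⟨le_rfl, hpi.le⟩)
      (show t ∈ Icc 0 π from ⟨htp.le, by linarith⟩)
      (show 0 ≤ 1 - s/t by rw [sub_nonneg, div_le_one htp]; exact hst)
      (show 0 ≤ s/t by positivity) (by ring)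
    simp at this
    rwa [div_mul_cancel₀ _ htp.ne'] at this
  rcases le_total 0 ((π - 2) * sin θ - θ) with hs | hs
  · have hm : MonotoneOn G (Icc 0 θ) := by
      apply monotoneOn_of_deriv_nonneg (convex_Icc 0 θ) hcont.continuousOn
      · exact fun t _ => (hd t).differentiableAt.differentiableWithinAt
      · intro t ht
        rw [interior_Icc] at ht
        rw [(hd t).deriv]
        apply mul_nonneg (hcos t ht.1.le (by linarith [ht.2]))
        have h3 := hsc t θ ht.1.le ht.2.le h1 hpos
        have h4 : t / θ * θ = t := div_mul_cancel₀ _ hpos.ne'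
        have h5 : 0 ≤ t / θ := by have := ht.1; positivity
        have h6 := mul_nonneg h5 hs
        have hp2 : 0 ≤ π - 2 := by linarith [pi_gt_three]
        have := mul_le_mul_of_nonneg_left h3 hp2
        nlinarith
    rw [← hG0]
    exact hm ⟨le_rfl, h0⟩ ⟨h0, le_rfl⟩ h0
  · have hm : AntitoneOn G (Icc θ (π/2)) := by
      apply antitoneOn_of_deriv_nonpos (convex_Icc θ (π/2)) hcont.continuousOn
      · exact fun t _ => (hd t).differentiableAt.differentiableWithinAt
      · intro t ht
        rw [interior_Icc] at ht
        rw [(hd t).deriv]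
        have htp : 0 < t := by linarith [ht.1]
        apply mul_nonpos_of_nonneg_of_nonpos (hcos t htp.le ht.2.le)
        have h3 := hsc θ t h0 ht.1.le ht.2.le htp
        rw [div_mul_eq_mul_div, div_le_iff₀ htp] at h3
        have hp2 : 0 ≤ π - 2 := by linarith [pi_gt_three]
        have h4 := mul_le_mul_of_nonneg_left h3 hp2
        have h5 : θ * ((π - 2) * sin t - t) ≤ 0 := by nlinarith
        by_contra hc
        have := mul_pos hpos (not_le.1 hc)
        linarith
    rw [← hG1]
    exact hm ⟨le_rfl, h1⟩ ⟨h1, le_rfl⟩ h1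

lemma JJ_eq {A B : ℝ} : JJ A B = 2 * ∫ φ in (-(π/2))..(π/2), max A (B * |cos φ|) := by
  have hper : Function.Periodic (fun φ => max A (B * |cos φ|)) π := by
    intro φ; simp
  unfold JJ
  rw [← intervalIntegral.integral_add_adjacent_intervals (JJ_int A B (-π) 0) (JJ_int A B 0 π)]
  have h1 := hper.intervalIntegral_add_eq (-π) (-(π/2))
  have h2 := hper.intervalIntegral_add_eq 0 (-(π/2))
  rw [show -π + π = 0 by ring, show -(π/2) + π = π/2 by ring] at h1
  rw [zero_add, show -(π/2) + π = π/2 by ring] at h2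
  rw [h1, h2]; ring

lemma JJ_le {A B : ℝ} (hA : 0 ≤ A) (hB : 0 < B) (hAB : A ≤ B) :
    JJ A B ≤ 4 * B + 4 * (π/2 - 1) * A^2 / B := by
  set θ := arcsin (A/B) with hθ
  have hab0 : 0 ≤ A/B := by positivity
  have hab1 : A/B ≤ 1 := (div_le_one hB).2 hAB
  have hsin : sin θ = A/B := sin_arcsin (by linarith) hab1
  have hθ0 : 0 ≤ θ := arcsin_nonneg.2 hab0
  have hθ1 : θ ≤ π/2 := arcsin_le_pi_div_two _
  have hA' : A = B * sin θ := by rw [hsin]; field_simp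
  set α := π/2 - θ with hα
  have hcosα : cos α = sin θ := by rw [hα, cos_pi_div_two_sub]
  have hsinα : sin α = cos θ := by rw [hα, sin_pi_div_two_sub]
  have hpi := pi_pos
  have hmid : ∫ φ in (-α)..α, max A (B * |cos φ|) = 2 * B * cos θ := by
    rw [intervalIntegral.integral_congr (g := fun φ => B * cos φ)]
    · rw [intervalIntegral.integral_const_mul, integral_cos, sin_neg, hsinα]; ring
    · intro φ hφ
      rw [uIcc_of_le (by linarith)] at hφ
      have hc : cos α ≤ cos φ := by
        rw [← cos_abs φ]
        apply cos_le_cos_of_nonneg_of_le_pi (abs_nonneg _) (by linarith)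
        exact abs_le.2 hφ
      have h0 : 0 ≤ cos φ := by
        have : 0 ≤ sin θ := by rw [hsin]; exact hab0
        linarith
      simp only
      rw [abs_of_nonneg h0, max_eq_right]
      rw [hA', ← hcosα]; gcongr
  have hside : ∀ φ, α ≤ |φ| → |φ| ≤ π/2 → max A (B * |cos φ|) = A := by
    intro φ h1 h2
    apply max_eq_left
    have h0 : 0 ≤ cos φ := cos_nonneg_of_mem_Icc (abs_le.1 h2)
    rw [abs_of_nonneg h0, hA', ← hcosα, ← cos_abs φ]
    gcongr
    exact cos_le_cos_of_nonneg_of_le_pi (by linarith) (by linarith) h1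
  have hleft : ∫ φ in (-(π/2))..(-α), max A (B * |cos φ|) = θ * A := by
    rw [intervalIntegral.integral_congr (g := fun _ => A)]
    · simp [hα]
    · intro φ hφ
      rw [uIcc_of_le (by linarith)] at hφ
      apply hside
      · rw [abs_of_nonpos (by linarith [hφ.2])]; linarith [hφ.2]
      · rw [abs_of_nonpos (by linarith [hφ.2])]; linarith [hφ.1]
  have hright : ∫ φ in α..(π/2), max A (B * |cos φ|) = θ * A := by
    rw [intervalIntegral.integral_congr (g := fun _ => A)]
    · simp [hα]
    · intro φ hφ
      rw [uIcc_of_le (by linarith)] at hφ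
      apply hside
      · rw [abs_of_nonneg (by linarith [hφ.1])]; linarith [hφ.1]
      · rw [abs_of_nonneg (by linarith [hφ.1])]; linarith [hφ.2]
  rw [JJ_eq, ← intervalIntegral.integral_add_adjacent_intervals (JJ_int A B _ α) (JJ_int A B α _),
    ← intervalIntegral.integral_add_adjacent_intervals (JJ_int A B _ (-α)) (JJ_int A B (-α) _),
    hleft, hmid, hright]
  have := trig_ineq hθ0 hθ1
  have h2 := mul_le_mul_of_nonneg_left this (by linarith : 0 ≤ 4 * B)
  have h3 : 4 * (π/2 - 1) * A^2 / B = 4 * B * ((π/2 - 1) * sin θ ^ 2) := by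
    rw [hA']; field_simp
  rw [h3]
  have h4 : θ * A = θ * (B * sin θ) := by rw [← hA']
  rw [h4]
  linarith

lemma cyl_mp (b : OrthonormalBasis (Fin 3) ℝ E3) :
    MeasurePreserving (fun x : E3 => ((⟪b 0, x⟫, (⟪b 1, x⟫, ⟪b 2, x⟫)) : ℝ × ℝ × ℝ)) := by
  have h1 := b.measurePreserving_repr
  have h2 := PiLp.volume_preserving_ofLp (Fin 3)
  have h3 := volume_preserving_piFinSuccAbove (fun _ : Fin 3 => ℝ) 0
  have h4 := (MeasurePreserving.id (volume : Measure ℝ)).prod (volume_preserving_finTwoArrow ℝ)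
  have h5 := (h4.comp h3).comp (h2.comp h1)
  have e : (fun x : E3 => ((⟪b 0, x⟫, (⟪b 1, x⟫, ⟪b 2, x⟫)) : ℝ × ℝ × ℝ)) =
      ((Prod.map id MeasurableEquiv.finTwoArrow ∘ (MeasurableEquiv.piFinSuccAbove (fun _ : Fin 3 => ℝ) 0)) ∘
      WithLp.ofLp ∘ b.repr) := by
    funext x
    simp only [← b.repr_apply_apply]
    rfl
  rw [e]
  exact h5

lemma cyl (b : OrthonormalBasis (Fin 3) ℝ E3) {f : ℝ × ℝ × ℝ → ℝ≥0∞} (hf : Measurable f) :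
    ∫⁻ x : E3, f (⟪b 0, x⟫, (⟪b 1, x⟫, ⟪b 2, x⟫)) =
      ∫⁻ y, ∫⁻ s in Ioi (0:ℝ), ∫⁻ φ in Ioo (-π) π,
        ENNReal.ofReal s * f (y, (s * cos φ, s * sin φ)) := by
  rw [(cyl_mp b).lintegral_comp hf, Measure.volume_eq_prod, lintegral_prod _ hf.aemeasurable]
  congr 1; ext y
  rw [← lintegral_comp_polarCoord_symm]
  have : polarCoord.target = Ioi (0:ℝ) ×ˢ Ioo (-π) π := rfl
  rw [this, Measure.volume_eq_prod, setLIntegral_prod]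
  · simp only [polarCoord_symm_apply, smul_eq_mul]
  · apply Measurable.aemeasurable
    simp only [polarCoord_symm_apply, smul_eq_mul]
    fun_prop

lemma basis_ex (u T : E3) : ∃ b : OrthonormalBasis (Fin 3) ℝ E3,
    ⟪b 1, u⟫ = 0 ∧ ⟪b 2, u⟫ = 0 ∧ ⟪b 2, T⟫ = 0 := by
  have hd : Module.finrank ℝ E3 = Fintype.card (Fin 3) := by simp
  let f : Fin 3 → E3 := ![u, T, 0]
  let b := InnerProductSpace.gramSchmidtOrthonormalBasis hd f
  refine ⟨b, ?_, ?_, ?_⟩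
  · exact InnerProductSpace.gramSchmidtOrthonormalBasis_inv_triangular hd f (i := 0) (j := 1) (by decide)
  · exact InnerProductSpace.gramSchmidtOrthonormalBasis_inv_triangular hd f (i := 0) (j := 2) (by decide)
  · exact InnerProductSpace.gramSchmidtOrthonormalBasis_inv_triangular hd f (i := 1) (j := 2) (by decide)

lemma basis_inner (b : OrthonormalBasis (Fin 3) ℝ E3) (x y : E3) :
    ⟪x, y⟫ = ⟪b 0, x⟫ * ⟪b 0, y⟫ + ⟪b 1, x⟫ * ⟪b 1, y⟫ + ⟪b 2, x⟫ * ⟪b 2, y⟫ := by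
  rw [← b.sum_inner_mul_inner x y, Fin.sum_univ_three]
  simp [real_inner_comm]

lemma basis_norm (b : OrthonormalBasis (Fin 3) ℝ E3) (x : E3) :
    ‖x‖^2 = ⟪b 0, x⟫^2 + ⟪b 1, x⟫^2 + ⟪b 2, x⟫^2 := by
  rw [← real_inner_self_eq_norm_sq, basis_inner b]; ring

/-- integral of `s ds` over an interval-type set `lo ≤ s² ≤ hi`. -/
lemma ann {lo hi : ℝ} (h : lo ≤ hi) :
    ∫⁻ s in Ioi (0:ℝ), ENNReal.ofReal s * (if lo ≤ s^2 ∧ s^2 ≤ hi then 1 else 0) ≤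
      ENNReal.ofReal ((hi - max lo 0)/2) := by
  by_cases hh : hi < 0
  · have : ∀ s : ℝ, (if lo ≤ s^2 ∧ s^2 ≤ hi then (1:ℝ≥0∞) else 0) = 0 := by
      intro s; rw [if_neg]; rintro ⟨_, h2⟩; nlinarith [sq_nonneg s]
    simp [this]
  push Not at hh
  set l := √(max lo 0)
  set m := √hi
  have hl : l^2 = max lo 0 := sq_sqrt (le_max_right _ _)
  have hm : m^2 = hi := sq_sqrt hh
  have hlm : l ≤ m := sqrt_le_sqrt (max_le h hh)
  have hl0 : 0 ≤ l := sqrt_nonneg _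
  calc _ ≤ ∫⁻ s in Ioi (0:ℝ), (Icc l m).indicator (fun s => ENNReal.ofReal s) s := by
        apply setLIntegral_mono' measurableSet_Ioi
        intro s hs
        have hs' : 0 < s := hs
        split_ifs with hc
        · rw [indicator_of_mem, mul_one]
          refine ⟨?_, ?_⟩
          · apply sqrt_le_iff.2 ⟨hs'.le, max_le hc.1 (sq_nonneg s)⟩
          · apply le_sqrt_of_sq_le hc.2
        · simp
    _ ≤ ∫⁻ s in Icc l m, ENNReal.ofReal s := by
        rw [← lintegral_indicator measurableSet_Icc]
        exact setLIntegral_le_lintegral _ _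
    _ = ENNReal.ofReal ((hi - max lo 0)/2) := by
        rw [setLIntegral_congr (Ioc_ae_eq_Icc).symm, ← ofReal_integral_eq_lintegral_ofReal,
          ← intervalIntegral.integral_of_le hlm, integral_id, hl, hm]
        · exact (continuous_id.intervalIntegrable (μ := volume) l m).1
        · filter_upwards [ae_restrict_mem measurableSet_Ioc] with s hs
          exact hl0.trans hs.1.le

lemma tau_pos : 0 < tau := by norm_num [tau]
lemma one_lt_tau : 1 < tau := by norm_num [tau]

lemma Sh_iff (x : E3) : x ∈ Sh ↔ 1 ≤ ‖x‖^2 ∧ ‖x‖^2 ≤ tau^2 := by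
  have h0 := norm_nonneg x
  have h1 := one_lt_tau
  constructor
  · rintro ⟨h, h'⟩
    exact ⟨by nlinarith, by nlinarith⟩
  · rintro ⟨h, h'⟩
    exact ⟨by nlinarith, by nlinarith⟩

lemma lint_pp {a : ℝ} (ha : a ≠ 0) : ∫⁻ y, ENNReal.ofReal (pp (a * y)) = ENNReal.ofReal (I0 / |a|) := by
  have hintg : Integrable pp := by
    apply continuous_pp.integrable_of_hasCompactSupport
    apply HasCompactSupport.of_support_subset_isCompact (isCompact_Icc (a := tau) (b := tau^2))
    intro s hs
    by_contra hc
    apply hs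
    apply pp_eq_zero
    simp only [mem_Icc, not_and_or, not_le] at hc
    exact hc.imp le_of_lt le_of_lt
  rw [← ofReal_integral_eq_lintegral_ofReal (hintg.comp_mul_left' ha)
    (Filter.Eventually.of_forall fun y => pp_nonneg _), Measure.integral_comp_mul_left pp a,
    integral_pp_univ, smul_eq_mul, abs_inv]
  congr 1; field_simp

set_option maxHeartbeats 2000000 in
lemma RRg_le {u T : E3} (hr : 1 ≤ ‖u‖) (hT : ‖T‖ = 1) :
    ∫ x in Sh, pp ⟪u, x⟫ * |⟪T, x⟫| ≤
      tau^2 * ((tau^2 - 1)/2) * I0 / ‖u‖^3 *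
        JJ |⟪u, T⟫| (√(‖u‖^2 - 1) * √(‖u‖^2 - ⟪u, T⟫^2)) := by
  obtain ⟨b, hb1, hb2, hb3⟩ := basis_ex u T
  set a := ⟪b 0, u⟫ with ha
  set T0 := ⟪b 0, T⟫ with hT0
  set T1 := ⟪b 1, T⟫ with hT1
  set h := ⟪u, T⟫ with hh
  set r := ‖u‖ with hrdef
  have hr0 : 0 < r := by linarith
  have hht : h = a * T0 := by rw [hh, basis_inner b u T, hb1, hb2]; ring
  have har : a^2 = r^2 := by rw [hrdef, basis_norm b u, hb1, hb2]; ring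
  have hT2 : T0^2 + T1^2 = 1 := by
    have := basis_norm b T
    rw [hT, hb3] at this; linarith
  have habs : |a| = r := by rw [← abs_of_pos hr0]; exact (sq_eq_sq_iff_abs_eq_abs _ _).1 har
  have ha0 : a ≠ 0 := by intro h0; rw [h0] at habs; simp at habs; linarith
  set n := √(r^2 - 1) with hn
  set δ := √(r^2 - h^2) with hδ
  have hn2 : n^2 = r^2 - 1 := sq_sqrt (by nlinarith)
  have hδ2 : δ^2 = r^2 * T1^2 := by
    rw [hδ, sq_sqrt]
    · rw [hht]; nlinarith
    · rw [hht]; nlinarith [sq_nonneg (r * T1)]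
  have hn0 : 0 ≤ n := sqrt_nonneg _
  have hδ0 : 0 ≤ δ := sqrt_nonneg _
  have hT0a : |T0| = |h| / r := by
    rw [hht, abs_mul, habs]; field_simp
  have hT1a : |T1| = δ / r := by
    rw [eq_div_iff hr0.ne', ← abs_of_pos hr0, ← abs_mul, ← abs_of_nonneg hδ0]
    apply (sq_eq_sq_iff_abs_eq_abs _ _).1
    rw [hδ2]; ring
  have htau := tau_pos
  have htau1 := one_lt_tau
  set K := tau^2 / r^2 with hK
  have hK0 : 0 ≤ K := by positivity
  set A := |h|
  set B := n * δ
  have hI0 := I0_pos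
  have hJ : 0 ≤ JJ A B := JJ_nonneg (abs_nonneg _)
  set f : ℝ × ℝ × ℝ → ℝ≥0∞ := fun z => ENNReal.ofReal (pp (a * z.1)) *
    (ENNReal.ofReal |T0 * z.1 + T1 * z.2.1| *
      (if 1 ≤ z.1^2 + z.2.1^2 + z.2.2^2 ∧ z.1^2 + z.2.1^2 + z.2.2^2 ≤ tau^2 then 1 else 0)) with hf
  have hfm : Measurable f := by
    have hp : Measurable pp := continuous_pp.measurable
    have hs : MeasurableSet {z : ℝ × ℝ × ℝ | 1 ≤ z.1^2 + z.2.1^2 + z.2.2^2 ∧ z.1^2 + z.2.1^2 + z.2.2^2 ≤ tau^2} := by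
      have hq : Measurable (fun z : ℝ × ℝ × ℝ => z.1^2 + z.2.1^2 + z.2.2^2) := by fun_prop
      exact (measurableSet_le measurable_const hq).inter (measurableSet_le hq measurable_const)
    have h3 : Measurable (fun z : ℝ × ℝ × ℝ => if 1 ≤ z.1^2 + z.2.1^2 + z.2.2^2 ∧ z.1^2 + z.2.1^2 + z.2.2^2 ≤ tau^2 then (1:ℝ≥0∞) else 0) :=
      Measurable.ite hs measurable_const measurable_const
    have h1 : Measurable (fun z : ℝ × ℝ × ℝ => ENNReal.ofReal (pp (a * z.1))) := by fun_prop
    have h2 : Measurable (fun z : ℝ × ℝ × ℝ => ENNReal.ofReal |T0 * z.1 + T1 * z.2.1|) := by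
      apply Measurable.ennreal_ofReal
      apply Continuous.measurable; fun_prop
    exact h1.mul (h2.mul h3)
  have key : ∫⁻ x in Sh, ENNReal.ofReal (pp ⟪u, x⟫ * |⟪T, x⟫|) = ∫⁻ x : E3, f (⟪b 0, x⟫, (⟪b 1, x⟫, ⟪b 2, x⟫)) := by
    rw [← lintegral_indicator Sh_meas]
    congr 1; ext x
    have e1 : ⟪u, x⟫ = a * ⟪b 0, x⟫ := by rw [basis_inner b u x, hb1, hb2]; ring
    have e2 : ⟪T, x⟫ = T0 * ⟪b 0, x⟫ + T1 * ⟪b 1, x⟫ := by rw [basis_inner b T x, hb3]; ring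
    have e3 := Sh_iff x
    rw [basis_norm b x] at e3
    simp only [hf]
    by_cases hx : x ∈ Sh
    · rw [indicator_of_mem hx, if_pos (e3.1 hx), e1, e2, ENNReal.ofReal_mul (pp_nonneg _), mul_one]
    · rw [indicator_of_notMem hx, if_neg (fun h => hx (e3.2 h)), mul_zero, mul_zero]
  have inner : ∀ y, ∫⁻ s in Ioi (0:ℝ), ∫⁻ φ in Ioo (-π) π,
        ENNReal.ofReal s * f (y, (s * cos φ, s * sin φ)) ≤
        ENNReal.ofReal (pp (a * y)) * (ENNReal.ofReal ((tau^2 - 1)/2) * ENNReal.ofReal (K * JJ A B)) := by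
    intro y
    by_cases hy : a * y ≤ tau ∨ tau^2 ≤ a * y
    · have : pp (a * y) = 0 := pp_eq_zero hy
      simp [hf, this]
    push Not at hy
    have hyr : |y| = a * y / r := by
      rw [eq_div_iff hr0.ne', ← habs, ← abs_mul, mul_comm, abs_of_pos]; linarith
    have hy1 : |y| ≤ tau^2 / r := by rw [hyr]; gcongr; exact hy.2.le
    have hy2 : tau / r ≤ |y| := by rw [hyr]; gcongr; exact hy.1.le
    have hsx : ∀ s φ : ℝ, y^2 + (s * cos φ)^2 + (s * sin φ)^2 = y^2 + s^2 := by
      intro s φ; rw [mul_pow, mul_pow, add_assoc, ← mul_add, cos_sq_add_sin_sq, mul_one]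
    have hstep : ∀ s ∈ Ioi (0:ℝ), ∫⁻ φ in Ioo (-π) π, ENNReal.ofReal s * f (y, (s * cos φ, s * sin φ)) ≤
        ENNReal.ofReal (pp (a * y)) * ENNReal.ofReal (K * JJ A B) *
        (ENNReal.ofReal s * (if 1 - y^2 ≤ s^2 ∧ s^2 ≤ tau^2 - y^2 then 1 else 0)) := by
      intro s hs
      have hs' : 0 < s := hs
      simp only [hf, hsx]
      by_cases hc : 1 ≤ y^2 + s^2 ∧ y^2 + s^2 ≤ tau^2
      · simp only [if_pos hc]
        rw [if_pos ⟨by linarith [hc.1], by linarith [hc.2]⟩]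
        simp only [mul_one]
        have hsb : |T1 * s| ≤ K * B := by
          rw [abs_mul, hT1a, abs_of_pos hs']
          have : s ≤ tau^2 * n / r := by
            apply le_of_sq_le_sq _ (by positivity)
            have h1 : (tau/r)^2 ≤ y^2 := by rw [← sq_abs y]; gcongr
            have h2 : s^2 ≤ tau^2 - (tau/r)^2 := by linarith [hc.2]
            have h3 : tau^2 - (tau/r)^2 = tau^2 * n^2 / r^2 := by rw [hn2]; field_simp
            rw [h3] at h2
            refine h2.trans ?_
            rw [div_pow, mul_pow]
            gcongr
            nlinarith
          calc δ / r * s ≤ δ / r * (tau^2 * n / r) := by gcongr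
            _ = K * B := by simp only [hK, B]; field_simp
        have hya : |T0 * y| ≤ K * A := by
          rw [abs_mul, hT0a]
          calc |h| / r * |y| ≤ |h| / r * (tau^2 / r) := by gcongr
            _ = K * A := by simp only [hK, A]; field_simp
        have := lint_abs_le hya hsb
        rw [JJ_smul hK0] at this
        calc _ = ∫⁻ φ in Ioo (-π) π, (ENNReal.ofReal s * ENNReal.ofReal (pp (a * y))) * ENNReal.ofReal |T0 * y + T1 * s * cos φ| := by
              congr 1; ext φ; rw [← mul_assoc]; ring_nf
          _ = (ENNReal.ofReal s * ENNReal.ofReal (pp (a * y))) * ∫⁻ φ in Ioo (-π) π, ENNReal.ofReal |T0 * y + T1 * s * cos φ| := by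
              rw [lintegral_const_mul]
              apply Measurable.ennreal_ofReal
              apply Continuous.measurable; fun_prop
          _ ≤ (ENNReal.ofReal s * ENNReal.ofReal (pp (a * y))) * ENNReal.ofReal (K * JJ A B) := by gcongr
          _ = _ := by ring
      · simp [if_neg hc]
    calc _ ≤ ∫⁻ s in Ioi (0:ℝ), ENNReal.ofReal (pp (a * y)) * ENNReal.ofReal (K * JJ A B) *
        (ENNReal.ofReal s * (if 1 - y^2 ≤ s^2 ∧ s^2 ≤ tau^2 - y^2 then 1 else 0)) :=
          setLIntegral_mono' measurableSet_Ioi hstep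
      _ = ENNReal.ofReal (pp (a * y)) * ENNReal.ofReal (K * JJ A B) * ∫⁻ s in Ioi (0:ℝ), 
        (ENNReal.ofReal s * (if 1 - y^2 ≤ s^2 ∧ s^2 ≤ tau^2 - y^2 then 1 else 0)) := by
          rw [lintegral_const_mul' _ _ (ENNReal.mul_ne_top ENNReal.ofReal_ne_top ENNReal.ofReal_ne_top)]
      _ ≤ ENNReal.ofReal (pp (a * y)) * ENNReal.ofReal (K * JJ A B) * ENNReal.ofReal ((tau^2 - 1)/2) := by
          gcongr
          refine (ann (by nlinarith)).trans (ENNReal.ofReal_le_ofReal ?_)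
          have := le_max_left (1 - y^2) 0
          linarith
      _ = _ := by ring
  rw [integral_eq_lintegral_of_nonneg_ae]
  · apply ENNReal.toReal_le_of_le_ofReal (by have : 0 ≤ tau^2 - 1 := by nlinarith
                                             positivity)
    rw [key, cyl b hfm]
    refine (lintegral_mono inner).trans ?_
    rw [lintegral_mul_const' _ _ (ENNReal.mul_ne_top ENNReal.ofReal_ne_top ENNReal.ofReal_ne_top),
      lint_pp ha0, habs, ← ENNReal.ofReal_mul (by nlinarith), ← ENNReal.ofReal_mul (by positivity)]
    apply ENNReal.ofReal_le_ofReal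
    apply le_of_eq
    rw [hK]; field_simp
  · exact Filter.Eventually.of_forall fun x => mul_nonneg (pp_nonneg _) (abs_nonneg _)
  · apply Continuous.aestronglyMeasurable
    exact (continuous_pp.comp (by fun_prop)).mul (by fun_prop)

lemma vol_Sh : volume.real Sh = 4 * π / 3 * (tau^3 - 1) := by
  have h1 := one_lt_tau
  have e : Sh = Metric.closedBall (0:E3) tau \ Metric.ball (0:E3) 1 := by
    ext x; simp [Sh, and_comm]
  rw [e, measureReal_sdiff (Metric.ball_subset_closedBall.trans (Metric.closedBall_subset_closedBall h1.le))
    measurableSet_ball measure_closedBall_lt_top.ne]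
  · unfold Measure.real
    rw [EuclideanSpace.volume_closedBall_fin_three, EuclideanSpace.volume_ball_fin_three]
    have := pi_pos
    rw [ENNReal.toReal_mul, ENNReal.toReal_mul, ENNReal.toReal_pow, ENNReal.toReal_ofReal tau_pos.le,
      ENNReal.toReal_ofReal (by positivity)]
    simp; ring

lemma cap_vol {u : E3} (hr : 1 ≤ ‖u‖) :
    volume.real {x | x ∈ Sh ∧ tau ≤ ⟪u, x⟫} ≤ π * (tau^2 - 1) * tau * (1 - 1/‖u‖) := by
  obtain ⟨b, hb1, hb2, -⟩ := basis_ex u 0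
  set a := ⟪b 0, u⟫ with ha
  set r := ‖u‖ with hrdef
  have hr0 : 0 < r := by linarith
  have har : a^2 = r^2 := by rw [hrdef, basis_norm b u, hb1, hb2]; ring
  have habs : |a| = r := by rw [← abs_of_pos hr0]; exact (sq_eq_sq_iff_abs_eq_abs _ _).1 har
  have htau := tau_pos
  have htau1 := one_lt_tau
  set f : ℝ × ℝ × ℝ → ℝ≥0∞ := fun z => (if tau ≤ a * z.1 then 1 else 0) *
      (if 1 ≤ z.1^2 + z.2.1^2 + z.2.2^2 ∧ z.1^2 + z.2.1^2 + z.2.2^2 ≤ tau^2 then 1 else 0) with hf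
  have hq : Measurable (fun z : ℝ × ℝ × ℝ => z.1^2 + z.2.1^2 + z.2.2^2) := by fun_prop
  have hq1 : Measurable (fun z : ℝ × ℝ × ℝ => a * z.1) := by fun_prop
  have hfm : Measurable f :=
    (Measurable.ite (measurableSet_le measurable_const hq1) measurable_const measurable_const).mul
    (Measurable.ite ((measurableSet_le measurable_const hq).inter
      (measurableSet_le hq measurable_const)) measurable_const measurable_const)
  have hS : MeasurableSet {x : E3 | x ∈ Sh ∧ tau ≤ ⟪u, x⟫} := 
    Sh_meas.inter (measurableSet_le measurable_const (by fun_prop : Continuous fun x : E3 => ⟪u, x⟫).measurable)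
  have key : volume {x | x ∈ Sh ∧ tau ≤ ⟪u, x⟫} = ∫⁻ x : E3, f (⟪b 0, x⟫, (⟪b 1, x⟫, ⟪b 2, x⟫)) := by
    rw [← lintegral_indicator_one hS]
    congr 1; ext x
    have e1 : ⟪u, x⟫ = a * ⟪b 0, x⟫ := by rw [basis_inner b u x, hb1, hb2]; ring
    have e3 := Sh_iff x
    rw [basis_norm b x] at e3
    simp only [hf, indicator_apply, mem_ofPred_eq, e1, e3]
    split_ifs <;> simp_all
  set Y : Set ℝ := {y | tau ≤ a * y ∧ |y| ≤ tau} with hY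
  have inner : ∀ y, ∫⁻ s in Ioi (0:ℝ), ∫⁻ φ in Ioo (-π) π,
        ENNReal.ofReal s * f (y, (s * cos φ, s * sin φ)) ≤
        Y.indicator 1 y * (ENNReal.ofReal (2*π) * ENNReal.ofReal ((tau^2 - 1)/2)) := by
    intro y
    have hsx : ∀ s φ : ℝ, y^2 + (s * cos φ)^2 + (s * sin φ)^2 = y^2 + s^2 := by
      intro s φ; rw [mul_pow, mul_pow, add_assoc, ← mul_add, cos_sq_add_sin_sq, mul_one]
    have hiff : ∀ s, (1 ≤ y^2 + s^2 ∧ y^2 + s^2 ≤ tau^2) ↔ (1 - y^2 ≤ s^2 ∧ s^2 ≤ tau^2 - y^2) := by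
      intro s
      constructor
      · rintro ⟨h1, h2⟩; exact ⟨by linarith, by linarith⟩
      · rintro ⟨h1, h2⟩; exact ⟨by linarith, by linarith⟩
    have e : ∀ s φ : ℝ, f (y, (s * cos φ, s * sin φ)) = (if tau ≤ a * y then 1 else 0) *
        (if 1 - y^2 ≤ s^2 ∧ s^2 ≤ tau^2 - y^2 then 1 else 0) := by
      intro s φ
      have := hsx s φ
      simp only [hf]
      congr 1
      exact if_congr (by rw [this]; exact hiff s) rfl rfl
    simp only [e, lintegral_const, Measure.restrict_apply_univ, Real.volume_Ioo]
    by_cases hy : y ∈ Y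
    · rw [indicator_of_mem hy, if_pos hy.1]
      simp only [Pi.one_apply, one_mul]
      rw [lintegral_mul_const' _ _ ENNReal.ofReal_ne_top, mul_comm, show π - -π = 2*π by ring]
      gcongr
      refine (ann (by nlinarith)).trans (ENNReal.ofReal_le_ofReal ?_)
      have := le_max_left (1 - y^2) 0
      linarith
    · rw [indicator_of_notMem hy, zero_mul]
      apply le_of_eq
      by_cases h1 : tau ≤ a * y
      · have h2 : tau < |y| := by
          by_contra hc; exact hy ⟨h1, not_lt.1 hc⟩
        have h3 : tau^2 < y^2 := by rw [← sq_abs y]; gcongr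
        have : ∀ s : ℝ, (if 1 - y^2 ≤ s^2 ∧ s^2 ≤ tau^2 - y^2 then (1:ℝ≥0∞) else 0) = 0 := by
          intro s; rw [if_neg]; rintro ⟨_, h⟩; nlinarith [sq_nonneg s]
        simp only [this, mul_zero, zero_mul, lintegral_zero]
      · simp [h1]
  have hYv : volume Y ≤ ENNReal.ofReal (tau - tau/r) := by
    rcases abs_eq hr0.le |>.1 habs with h | h
    · calc volume Y ≤ volume (Icc (tau/r) tau) := by
            apply measure_mono
            rintro y ⟨h1, h2⟩
            rw [h] at h1
            exact ⟨by rw [div_le_iff₀ hr0]; linarith, (le_abs_self y).trans h2⟩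
        _ = _ := by rw [Real.volume_Icc]
    · calc volume Y ≤ volume (Icc (-tau) (-(tau/r))) := by
            apply measure_mono
            rintro y ⟨h1, h2⟩
            rw [h] at h1
            refine ⟨(abs_le.1 h2).1, ?_⟩
            rw [le_neg, div_le_iff₀ hr0]; linarith
        _ = _ := by rw [Real.volume_Icc]; congr 1; ring
  have hYm : MeasurableSet Y := by
    apply MeasurableSet.inter
    · exact measurableSet_le measurable_const (by fun_prop : Continuous fun y : ℝ => a * y).measurable
    · exact measurableSet_le (by fun_prop : Continuous fun y : ℝ => |y|).measurable measurable_const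
  have hr1 : 1/r ≤ 1 := by rw [div_le_one hr0]; exact hr
  have hpi := pi_pos
  have ht2 : 0 ≤ tau^2 - 1 := by nlinarith
  have hr2 : 0 ≤ 1 - 1/r := by linarith
  unfold Measure.real
  apply ENNReal.toReal_le_of_le_ofReal (by positivity)
  rw [key, cyl b hfm]
  refine (lintegral_mono inner).trans ?_
  rw [lintegral_mul_const' _ _ (ENNReal.mul_ne_top ENNReal.ofReal_ne_top ENNReal.ofReal_ne_top),
    lintegral_indicator_one hYm]
  calc _ ≤ ENNReal.ofReal (tau - tau/r) * (ENNReal.ofReal (2*π) * ENNReal.ofReal ((tau^2 - 1)/2)) := by gcongr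
    _ = _ := by
      rw [← ENNReal.ofReal_mul (by positivity), ← ENNReal.ofReal_mul]
      · congr 1; field_simp
      · rw [sub_nonneg, div_le_iff₀ hr0]; nlinarith

lemma chi_cap {u : E3} (hr : 1 ≤ ‖u‖) :
    ∫ x in Sh, chi ⟪u, x⟫ ≤ I0 * (π * (tau^2 - 1) * tau * (1 - 1/‖u‖)) := by
  have hS : MeasurableSet {x : E3 | tau ≤ ⟪u, x⟫} := 
    (measurableSet_le measurable_const (by fun_prop : Continuous fun x : E3 => ⟪u, x⟫).measurable)
  have hI := I0_pos
  have hfin : IsFiniteMeasure (volume.restrict Sh) := ⟨by simpa using lt_top_iff_ne_top.2 Sh_fin⟩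
  calc _ ≤ ∫ x in Sh, ({x : E3 | tau ≤ ⟪u, x⟫}).indicator (fun _ => I0) x := by
        apply integral_mono_of_nonneg
        · exact Filter.Eventually.of_forall fun x => chi_nonneg _
        · exact (integrable_const I0).indicator hS
        · refine Filter.Eventually.of_forall fun x => ?_
          simp only [indicator_apply, mem_ofPred_eq]
          split_ifs with h
          · exact chi_le _
          · rw [chi_low (not_le.1 h).le]
    _ = I0 * volume.real {x | x ∈ Sh ∧ tau ≤ ⟪u, x⟫} := by
        rw [integral_indicator hS, Measure.restrict_restrict hS, setIntegral_const, smul_eq_mul, mul_comm]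
        congr 2
        ext x; simp [and_comm]
    _ ≤ _ := by gcongr; exact cap_vol hr

lemma half_chord {Γ : ℝ → E3} (hl : LipschitzWith 1 Γ) {T : E3} {x y : ℝ} (hxy : x ≤ y)
    (hT : ∀ t ∈ Ioo x y, HasDerivAt Γ T t) {q : E3} (hq : 1 ≤ ‖q‖)
    (h : (‖Γ x‖ ≤ 1 ∧ Γ y = q) ∨ (‖Γ y‖ ≤ 1 ∧ Γ x = q)) :
    ∫ t in x..y, RR Γ t ≤ I0 * (π * (tau^2 - 1) * tau * (1 - 1/‖q‖)) := by
  rw [RR_swap hl hxy]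
  refine le_trans (le_of_eq ?_) (chi_cap hq)
  apply setIntegral_congr_fun Sh_meas
  intro p hp
  have hz : ∀ v : E3, ‖v‖ ≤ 1 → chi ⟪v, p⟫ = 0 := by
    intro v hv
    apply chi_low
    have h1 := real_inner_le_norm v p
    have h2 : ‖p‖ ≤ tau := hp.2
    nlinarith [norm_nonneg v, norm_nonneg p]
  simp only
  rw [chi_affine hxy hT hl.continuous.continuousOn]
  rcases h with ⟨h1, h2⟩ | ⟨h1, h2⟩
  · rw [hz _ h1, h2, sub_zero, abs_of_nonneg (chi_nonneg _)]
  · rw [hz _ h1, h2, zero_sub, abs_neg, abs_of_nonneg (chi_nonneg _)]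

lemma num_a {n : ℝ} (h0 : 0 ≤ n) (h1 : n ≤ 9/8) :
    4 * (1002001/1000000) * n + 3/8 * (5/4 - n^2)^3 * (1 + n^2) ≤ 43/20 * (1 + n^2) := by
  have h2 : 0 ≤ 9/8 - n := by linarith
  linarith [mul_nonneg (pow_nonneg h0 0) (pow_nonneg h2 8),
      mul_nonneg (pow_nonneg h0 1) (pow_nonneg h2 7),
      mul_nonneg (pow_nonneg h0 2) (pow_nonneg h2 6),
      mul_nonneg (pow_nonneg h0 3) (pow_nonneg h2 5),
      mul_nonneg (pow_nonneg h0 4) (pow_nonneg h2 4),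
      mul_nonneg (pow_nonneg h0 5) (pow_nonneg h2 3),
      mul_nonneg (pow_nonneg h0 6) (pow_nonneg h2 2),
      mul_nonneg (pow_nonneg h0 7) (pow_nonneg h2 1),
      mul_nonneg (pow_nonneg h0 8) (pow_nonneg h2 0)]

lemma num_b1 {m : ℝ} (h0 : 0 ≤ m) (h1 : m ≤ 5/8) :
    (3964/100) * m ≤ (43/20 - 3/8 * (5/4 - m)^2 * (5/4 - 7 * m))^2 * (1 + m)^3 := by
  have h2 : 0 ≤ 5/8 - m := by linarith
  linarith [mul_nonneg (pow_nonneg h0 0) (pow_nonneg h2 9),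
      mul_nonneg (pow_nonneg h0 1) (pow_nonneg h2 8),
      mul_nonneg (pow_nonneg h0 2) (pow_nonneg h2 7),
      mul_nonneg (pow_nonneg h0 3) (pow_nonneg h2 6),
      mul_nonneg (pow_nonneg h0 4) (pow_nonneg h2 5),
      mul_nonneg (pow_nonneg h0 5) (pow_nonneg h2 4),
      mul_nonneg (pow_nonneg h0 6) (pow_nonneg h2 3),
      mul_nonneg (pow_nonneg h0 7) (pow_nonneg h2 2),
      mul_nonneg (pow_nonneg h0 8) (pow_nonneg h2 1),
      mul_nonneg (pow_nonneg h0 9) (pow_nonneg h2 0)]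

lemma num_b2 {m : ℝ} (h0 : 5/8 ≤ m) (h1 : m ≤ 5/4) :
    (3964/100) * m ≤ (43/20 - 3/8 * (5/4 - m)^2 * (5/4 - 7 * m))^2 * (1 + m)^3 := by
  have h2 : 0 ≤ 5/4 - m := by linarith
  have h3 : 0 ≤ m - 5/8 := by linarith
  linarith [mul_nonneg (pow_nonneg h3 0) (pow_nonneg h2 9),
      mul_nonneg (pow_nonneg h3 1) (pow_nonneg h2 8),
      mul_nonneg (pow_nonneg h3 2) (pow_nonneg h2 7),
      mul_nonneg (pow_nonneg h3 3) (pow_nonneg h2 6),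
      mul_nonneg (pow_nonneg h3 4) (pow_nonneg h2 5),
      mul_nonneg (pow_nonneg h3 5) (pow_nonneg h2 4),
      mul_nonneg (pow_nonneg h3 6) (pow_nonneg h2 3),
      mul_nonneg (pow_nonneg h3 7) (pow_nonneg h2 2),
      mul_nonneg (pow_nonneg h3 8) (pow_nonneg h2 1),
      mul_nonneg (pow_nonneg h3 9) (pow_nonneg h2 0)]

lemma PP_le_of {f f0 : ℝ} (h : f0 ≤ f) (h0 : f0 ≤ 9/4) : PP f ≤ 3/8 * (9/4 - f0)^3 := by
  unfold PP
  have h1 : max 0 (9/4 - f) ≤ 9/4 - f0 := max_le (by linarith) (by linarith)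
  have h2 : 0 ≤ max 0 (9/4 - f) := le_max_left _ _
  gcongr

/-- constant -/
def cc : ℝ := 43/20

lemma num_c {r : ℝ} (hr : 1 ≤ r) : (62895/10000)^2 * (r - 1) ≤ (cc - PP (r^2))^2 * (r^2 * (r + 1)) := by
  have key : ∀ A : ℝ, 0 ≤ cc - A → PP (r^2) ≤ A → (62895/10000)^2 * (r - 1) ≤ (cc - A)^2 * (r^2 * (r + 1)) →
      (62895/10000)^2 * (r - 1) ≤ (cc - PP (r^2))^2 * (r^2 * (r + 1)) := by
    intro A h1 h2 h3
    refine h3.trans ?_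
    gcongr
  unfold cc at *
  rcases le_total r (114/100) with h | h
  · apply key _ _ (PP_le_of (f0 := 1) (by nlinarith) (by norm_num))
    · nlinarith [mul_nonneg (by linarith : 0 ≤ r + 328/100) (sq_nonneg (r - 114/100))]
    · norm_num
  rcases le_total r (13/10) with h' | h'
  · apply key _ _ (PP_le_of (f0 := (114/100)^2) (by nlinarith) (by norm_num))
    · nlinarith [mul_nonneg (sub_nonneg.2 h) (sub_nonneg.2 h'), sq_nonneg r]
    · norm_num
  · apply key _ _ (PP_le_of (f0 := (13/10)^2) (by nlinarith) (by norm_num))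
    · nlinarith [mul_nonneg (by linarith : 0 ≤ r + 3) (sq_nonneg (r - 1618/1000))]
    · norm_num

lemma num_d {r : ℝ} (hr : 1 ≤ r) : 62895/10000 * (r - 1) + r ≤ (cc - PP (r^2)) * r^2 := by
  have key : ∀ A : ℝ, PP (r^2) ≤ A → 62895/10000 * (r - 1) + r ≤ (cc - A) * r^2 →
      62895/10000 * (r - 1) + r ≤ (cc - PP (r^2)) * r^2 := by
    intro A h2 h3
    refine h3.trans ?_
    gcongr
  unfold cc at *
  rcases le_total r (108/100) with h | h
  · apply key _ (PP_le_of (f0 := 1) (by nlinarith) (by norm_num))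
    nlinarith
  rcases le_total r (115/100) with h1 | h1
  · apply key _ (PP_le_of (f0 := (108/100)^2) (by nlinarith) (by norm_num))
    nlinarith
  rcases le_total r (125/100) with h2 | h2
  · apply key _ (PP_le_of (f0 := (115/100)^2) (by nlinarith) (by norm_num))
    nlinarith
  rcases le_total r (14/10) with h3 | h3
  · apply key _ (PP_le_of (f0 := (125/100)^2) (by nlinarith) (by norm_num))
    nlinarith
  · apply key _ (PP_le_of (f0 := (14/10)^2) (by nlinarith) (by norm_num))
    nlinarith [sq_nonneg (r - 17/10)]

lemma two_pi_tau : 2 * π * tau ≤ 62895/10000 := by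
  have := pi_lt_d4; unfold tau; linarith

lemma PP_lt_cc {f : ℝ} (h : 1 ≤ f) : PP f ≤ cc := by
  have := PP_le_of h (by norm_num); unfold cc; linarith

lemma hc_center {r : ℝ} (hr : 1 ≤ r) : 2 * π * tau * (1 - 1/r) + PP (r^2) * r + 1 ≤ cc * r := by
  have h := num_d hr
  have h1 := two_pi_tau
  have hr0 : 0 < r := by linarith
  have h2 : 2 * π * tau * (r - 1) ≤ 62895/10000 * (r - 1) := by gcongr
  have e : (2 * π * tau * (1 - 1/r) + PP (r^2) * r + 1) * r = 2 * π * tau * (r - 1) + PP (r^2) * r^2 + r := by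
    field_simp
  refine le_of_mul_le_mul_right ?_ hr0
  rw [e]; nlinarith

lemma hc_bound {r h : ℝ} (hr : 1 ≤ r) (hh : 0 ≤ h) (hrh : r^2 - 1 ≤ h^2) :
    2 * π * tau * (1 - 1/r) + PP (r^2) * h ≤ cc * h := by
  have hr0 : 0 < r := by linarith
  have hP : 0 ≤ cc - PP (r^2) := sub_nonneg.2 (PP_lt_cc (by nlinarith))
  have h1 := two_pi_tau
  suffices 62895/10000 * (r - 1) ≤ (cc - PP (r^2)) * h * r by
    have h2 : 2 * π * tau * (r - 1) ≤ 62895/10000 * (r - 1) := by gcongr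
    refine le_of_mul_le_mul_right ?_ hr0
    have e : (2 * π * tau * (1 - 1/r) + PP (r^2) * h) * r = 2 * π * tau * (r - 1) + PP (r^2) * h * r := by
      field_simp
    rw [e]; nlinarith
  apply le_of_sq_le_sq _ (by positivity)
  have h3 := num_c hr
  calc (62895/10000 * (r - 1))^2 = ((62895/10000)^2 * (r - 1)) * (r - 1) := by ring
    _ ≤ ((cc - PP (r^2))^2 * (r^2 * (r + 1))) * (r - 1) := by gcongr
    _ = (cc - PP (r^2))^2 * r^2 * (r^2 - 1) := by ring
    _ ≤ (cc - PP (r^2))^2 * r^2 * h^2 := by gcongr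
    _ = _ := by ring

lemma num_b {m : ℝ} (h0 : 0 ≤ m) :
    0 ≤ cc - (PP (1 + m) + 2 * PPd (1 + m) * m) ∧
    (3964/100) * m ≤ (cc - (PP (1 + m) + 2 * PPd (1 + m) * m))^2 * (1 + m)^3 := by
  unfold PP PPd cc
  rcases le_total m (5/4) with h | h
  · rw [max_eq_right (by linarith)]
    have e : 43/20 - (3/8 * (9/4 - (1 + m))^3 + 2 * (-(9/8) * (9/4 - (1 + m))^2) * m) =
      43/20 - 3/8 * (5/4 - m)^2 * (5/4 - 7 * m) := by ring
    rw [e]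
    constructor
    · have h1 : (5/4 - m)^2 ≤ 25/16 := by nlinarith
      have h2 : 0 ≤ (5/4 - m)^2 := sq_nonneg _
      nlinarith
    · rcases le_total m (5/8) with h' | h'
      · exact num_b1 h0 h'
      · exact num_b2 h' h
  · rw [max_eq_left (by linarith)]
    constructor
    · norm_num
    · nlinarith [mul_nonneg h0 (sq_nonneg (m - 1/2)), mul_nonneg (sub_nonneg.2 h) (sub_nonneg.2 h),
        mul_nonneg (mul_nonneg (sub_nonneg.2 h) (sub_nonneg.2 h)) h0, sq_nonneg (m-5/4)]

lemma num_a' {n : ℝ} (h0 : 0 ≤ n) :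
    4 * (1002001/1000000) * n + PP (1 + n^2) * (1 + n^2) ≤ cc * (1 + n^2) := by
  unfold PP cc
  rcases le_total (n^2) (5/4) with h | h
  · rw [max_eq_right (by linarith)]
    have := num_a h0 (by nlinarith)
    have e : (9/4 - (1 + n^2)) = 5/4 - n^2 := by ring
    rw [e]; exact this
  · rw [max_eq_left (by linarith)]
    nlinarith [sq_nonneg (n - 1)]

set_option maxHeartbeats 2000000 in
lemma pt_bound {r h : ℝ} (hr : 1 ≤ r) (hh : h^2 ≤ r^2 - 1) :
    tau^2 / r^3 * JJ |h| (√(r^2 - 1) * √(r^2 - h^2)) + (PP (r^2) + 2 * PPd (r^2) * h^2) ≤ cc := by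
  have hr0 : 0 < r := by linarith
  set n := √(r^2 - 1) with hn
  set δ := √(r^2 - h^2) with hδ
  have hn2 : n^2 = r^2 - 1 := sq_sqrt (by nlinarith)
  have hδ2 : δ^2 = r^2 - h^2 := sq_sqrt (by nlinarith)
  have hn0 : 0 ≤ n := sqrt_nonneg _
  have hδ0 : 0 ≤ δ := sqrt_nonneg _
  have hr2 : r^2 = 1 + n^2 := by linarith
  rcases eq_or_lt_of_le hn0 with h0 | hnp
  · have : r^2 - 1 = 0 := by rw [← hn2, ← h0]; ring
    have hz : h = 0 := by
      have : h^2 = 0 := le_antisymm (by linarith) (sq_nonneg _)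
      exact pow_eq_zero_iff (two_ne_zero) |>.1 this
    rw [← h0, hz]
    simp only [abs_zero, zero_mul]
    have : JJ 0 0 = 0 := by simp [JJ]
    rw [this]
    have := PP_lt_cc (f := r^2) (by nlinarith)
    simpa using this
  have hδ1 : 1 ≤ δ := by
    apply le_sqrt_of_sq_le; linarith
  have hδr : δ ≤ r := by
    apply sqrt_le_iff.2 ⟨hr0.le, by nlinarith [sq_nonneg h]⟩
  have hhn : |h| ≤ n := by
    apply le_sqrt_of_sq_le; rw [sq_abs]; exact hh
  have hJ := JJ_le (abs_nonneg h) (B := n * δ) (by positivity) (by nlinarith)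
  rw [sq_abs] at hJ
  set κ := π/2 - 1 with hκ
  have hκ0 : 57/100 ≤ κ := by have := pi_gt_d2; rw [hκ]; linarith
  have hκ1 : κ ≤ 5708/10000 := by have := pi_lt_d4; rw [hκ]; linarith
  have htau2 : tau^2 = 1002001/1000000 := by norm_num [tau]
  rw [htau2]
  set k : ℝ := 1002001/1000000 with hk
  have hk0 : 0 < k := by norm_num [hk]
  set l := h^2 / n^2 with hl
  have hl0 : 0 ≤ l := by positivity
  have hl1 : l ≤ 1 := by rw [hl, div_le_one (by positivity)]; linarith
  have hhl : h^2 = l * n^2 := by rw [hl]; field_simp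
  have hJ2 : JJ |h| (n * δ) ≤ 4 * n * (δ + κ * l / δ) := by
    refine hJ.trans (le_of_eq ?_)
    rw [hhl]; field_simp
  rcases le_total r 2 with hr2' | hr2'
  · have hb : δ + κ * l / δ ≤ (1 - l) * r + l * (1 + κ) := by
      have hd : δ^2 = r^2 - l * (r^2 - 1) := by rw [hδ2, hhl, hn2]
      have h1 : 0 ≤ (r - δ) * (δ - 1) * (κ * (r + δ) - (r - 1) * δ) := by
        apply mul_nonneg (mul_nonneg (by linarith) (by linarith))
        nlinarith
      have hpos : 0 < (r^2 - 1) := by rw [← hn2]; positivity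
      have hle : l = (r^2 - δ^2) / (r^2 - 1) := by rw [hd]; field_simp; ring
      have e : (1 - l) * r + l * (1 + κ) - (δ + κ * l / δ) =
          (r - δ) * (δ - 1) * (κ * (r + δ) - (r - 1) * δ) / ((r^2 - 1) * δ) := by
        rw [hle]
        have : r^2 - 1 ≠ 0 := hpos.ne'
        have : δ ≠ 0 := by linarith
        field_simp
        ring
      have : 0 ≤ (1 - l) * r + l * (1 + κ) - (δ + κ * l / δ) := by
        rw [e]; positivity
      linarith
    have hA : k / r^3 * (4 * n * r) + PP (r^2) ≤ cc := by
      have := num_a' hn0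
      rw [← hr2] at this
      have e : k / r^3 * (4 * n * r) + PP (r^2) = (4 * k * n + PP (r^2) * r^2) / r^2 := by field_simp
      rw [e, div_le_iff₀ (by positivity)]
      exact this
    have hB : k / r^3 * (4 * n * (1 + κ)) + (PP (r^2) + 2 * PPd (r^2) * n^2) ≤ cc := by
      obtain ⟨h1, h2⟩ := num_b (m := n^2) (sq_nonneg n)
      rw [← hr2] at h1 h2
      set Q := cc - (PP (r^2) + 2 * PPd (r^2) * n^2) with hQ
      have h3 : k * (4 * n * (1 + κ)) ≤ Q * r^3 := by
        apply le_of_sq_le_sq _ (by positivity)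
        have h4 : k * (4 * (1 + κ)) ≤ 6296/1000 := by rw [hk]; linarith
        have h5 : 0 ≤ k * (4 * (1 + κ)) := by positivity
        calc (k * (4 * n * (1 + κ)))^2 = (k * (4 * (1 + κ)))^2 * n^2 := by ring
          _ ≤ (6296/1000)^2 * n^2 := by gcongr
          _ ≤ 3964/100 * n^2 := by gcongr; norm_num
          _ ≤ _ := h2
          _ = _ := by ring
      have h6 : k / r^3 * (4 * n * (1 + κ)) ≤ Q := by
        rw [div_mul_eq_mul_div, div_le_iff₀ (by positivity)]; exact h3
      linarith
    have h7 : k / r^3 * JJ |h| (n * δ) ≤ (1 - l) * (k / r^3 * (4 * n * r)) + l * (k / r^3 * (4 * n * (1 + κ))) := by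
      calc k / r^3 * JJ |h| (n * δ) ≤ k / r^3 * (4 * n * ((1 - l) * r + l * (1 + κ))) := by
            gcongr
            exact hJ2.trans (by gcongr)
        _ = _ := by ring
    have h8 := mul_le_mul_of_nonneg_left hA (by linarith : 0 ≤ 1 - l)
    have h9 := mul_le_mul_of_nonneg_left hB hl0
    rw [hhl]
    nlinarith
  · have hP : PP (r^2) = 0 := by
      unfold PP; rw [max_eq_left (by nlinarith)]; norm_num
    have hPd : PPd (r^2) = 0 := by
      unfold PPd; rw [max_eq_left (by nlinarith)]; norm_num
    rw [hP, hPd]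
    have hb : δ + κ * l / δ ≤ r + κ / r := by
      have h1 : κ * l / δ ≤ κ / δ := by gcongr; nlinarith
      have h2 : r + κ/r - (δ + κ/δ) = (r - δ) * (r * δ - κ) / (r * δ) := by
        have : δ ≠ 0 := by linarith
        field_simp; ring
      have h3 : 0 ≤ r + κ/r - (δ + κ/δ) := by
        rw [h2]
        have : 0 ≤ r * δ - κ := by nlinarith
        have : 0 ≤ r - δ := by linarith
        positivity
      linarith
    set w := n / r^2 with hw
    have hw0 : 0 ≤ w := by positivity
    have hw1 : w ≤ 4331/10000 := by
      apply le_of_sq_le_sq _ (by norm_num)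
      rw [hw, div_pow, div_le_iff₀ (by positivity), hn2]
      nlinarith [sq_nonneg (r^2 - 2), mul_nonneg (sub_nonneg.2 hr2') (by linarith : 0 ≤ r + 2)]
    have h4 : κ / r^2 ≤ 15/100 := by
      rw [div_le_iff₀ (by positivity)]; nlinarith
    calc _ ≤ k / r^3 * (4 * n * (r + κ / r)) + (0 + 2 * 0 * h^2) := by
            gcongr
            exact hJ2.trans (by gcongr)
      _ = k * (4 * w * (1 + κ / r^2)) := by rw [hw]; field_simp; ring
      _ ≤ k * (4 * (4331/10000) * (1 + 15/100)) := by gcongr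
      _ ≤ cc := by norm_num [hk, cc]

/-- first variation integrand -/
def GG (Γ : ℝ → E3) (t : ℝ) : ℝ := PP (‖Γ t‖^2) + 2 * PPd (‖Γ t‖^2) * ⟪Γ t, deriv Γ t⟫^2

/-- normalization -/
def NN : ℝ := 3 / ((tau^3 - 1) * I0)

/-- defect -/
def DD (Γ : ℝ → E3) (t : ℝ) : ℝ := cc - NN * RR Γ t - GG Γ t

lemma NN_pos : 0 < NN := by
  have := I0_pos
  have h : 0 < tau^3 - 1 := by norm_num [tau]
  unfold NN; positivity

lemma NN_cover : NN * (2 * I0 * volume.real Sh) = 8 * π := by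
  have := I0_pos
  have h : tau^3 - 1 ≠ 0 := by norm_num [tau]
  rw [vol_Sh]; unfold NN; field_simp; ring

lemma NN_half {z : ℝ} (hz : 0 ≤ z) : NN * (I0 * (π * (tau^2 - 1) * tau * z)) ≤ 2 * π * tau * z := by
  have := I0_pos
  have h : 0 < tau^3 - 1 := by norm_num [tau]
  have e : NN * (I0 * (π * (tau^2 - 1) * tau * z)) = (3 * (tau^2 - 1) / (tau^3 - 1)) * (π * tau * z) := by
    unfold NN; field_simp
  have h2 : 3 * (tau^2 - 1) / (tau^3 - 1) ≤ 2 := by norm_num [tau]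
  rw [e]
  have := tau_pos
  have := pi_pos
  calc _ ≤ 2 * (π * tau * z) := by gcongr
    _ = _ := by ring

lemma NN_pt {r J : ℝ} (hr : 0 < r) (hJ : 0 ≤ J) :
    NN * (tau^2 * ((tau^2 - 1)/2) * I0 / r^3 * J) ≤ tau^2 / r^3 * J := by
  have := I0_pos
  have h : 0 < tau^3 - 1 := by norm_num [tau]
  have e : NN * (tau^2 * ((tau^2 - 1)/2) * I0 / r^3 * J) =
      (3 * (tau^2 - 1) / (2 * (tau^3 - 1))) * (tau^2 / r^3 * J) := by
    unfold NN; field_simp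
  have h2 : 3 * (tau^2 - 1) / (2 * (tau^3 - 1)) ≤ 1 := by norm_num [tau]
  rw [e]
  exact mul_le_of_le_one_left (by positivity) h2

namespace NC
variable {Γ : ℝ → E3} {L σ : ℝ} (H : NC Γ L σ)
include H

lemma GG_int (a b : ℝ) : IntervalIntegrable (GG Γ) volume a b := by
  have hmΓ : Measurable (deriv Γ) := measurable_deriv Γ
  have hc := H.cont
  obtain ⟨M, hM⟩ : ∃ M, ∀ t, ‖Γ t‖ ≤ M := by
    obtain ⟨M, hM⟩ := (isCompact_Icc (a := (0:ℝ)) (b := L)).exists_bound_of_continuousOn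
      hc.continuousOn
    refine ⟨M, fun t => ?_⟩
    obtain ⟨t', ht', he⟩ := H.per.exists_mem_Ico₀ H.Lpos t
    rw [he]; exact hM _ ⟨ht'.1, ht'.2.le⟩
  apply intervalIntegrable_of_bdd (M := 5 + 2 * 6 * M^2)
  · have h1 : Measurable (fun t => ⟪Γ t, deriv Γ t⟫) := hc.measurable.inner hmΓ
    have h2 : Measurable (fun t => PP (‖Γ t‖^2)) := (continuous_PP.comp (by fun_prop)).measurable
    have h3 : Measurable (fun t => PPd (‖Γ t‖^2)) := (continuous_PPd.comp (by fun_prop)).measurable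
    unfold GG
    fun_prop
  · intro t
    have h1 : |⟪Γ t, deriv Γ t⟫| ≤ M := (abs_real_inner_le_norm _ _).trans (by
      have := mul_le_mul (hM t) (H.norm_deriv_le t) (norm_nonneg _) ((norm_nonneg _).trans (hM t))
      simpa using this)
    have h2 : ⟪Γ t, deriv Γ t⟫^2 ≤ M^2 := by rw [← sq_abs]; gcongr
    have h3 := PP_nonneg (‖Γ t‖^2)
    have h4 := PP_le (f := ‖Γ t‖^2) (by positivity)
    have h5 := PPd_nonpos (‖Γ t‖^2)
    have h6 : -6 ≤ PPd (‖Γ t‖^2) := by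
      unfold PPd
      have h1 : max 0 (9/4 - ‖Γ t‖^2) ≤ 9/4 := by
        apply max_le
        · norm_num
        · nlinarith [sq_nonneg ‖Γ t‖]
      have h0 : 0 ≤ max 0 (9/4 - ‖Γ t‖^2) := le_max_left _ _
      have := pow_le_pow_left₀ h0 h1 2
      linarith
    have h7 : 0 ≤ ⟪Γ t, deriv Γ t⟫^2 := sq_nonneg _
    have h8 : (-PPd (‖Γ t‖^2)) * ⟪Γ t, deriv Γ t⟫^2 ≤ 6 * M^2 :=
      mul_le_mul (by linarith) h2 h7 (by norm_num)
    have h9 : 0 ≤ (-PPd (‖Γ t‖^2)) * ⟪Γ t, deriv Γ t⟫^2 := mul_nonneg (by linarith) h7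
    unfold GG
    rw [abs_le]; constructor <;> nlinarith

lemma RR_ii (a b : ℝ) : IntervalIntegrable (RR Γ) volume a b :=
  ⟨RR_int H.lip a b, RR_int H.lip b a⟩

lemma DD_ii (a b : ℝ) : IntervalIntegrable (DD Γ) volume a b :=
  (intervalIntegrable_const.sub ((H.RR_ii a b).const_mul NN)).sub (H.GG_int a b)

lemma DD_eq (a b : ℝ) : ∫ t in a..b, DD Γ t =
    cc * (b - a) - NN * (∫ t in a..b, RR Γ t) - ∫ t in a..b, GG Γ t := by
  unfold DD
  rw [intervalIntegral.integral_sub (intervalIntegrable_const.sub ((H.RR_ii a b).const_mul NN)) (H.GG_int a b),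
    intervalIntegral.integral_sub intervalIntegrable_const ((H.RR_ii a b).const_mul NN),
    intervalIntegral.integral_const_mul, intervalIntegral.integral_const, smul_eq_mul]
  ring

omit H in
lemma chord_deriv {x y : ℝ} {T : E3} (haff : ∀ t ∈ Icc x y, Γ t = Γ x + (t - x) • T) {t : ℝ}
    (ht : t ∈ Ioo x y) : HasDerivAt Γ T t := by
  have h1 : HasDerivAt (fun t => Γ x + (t - x) • T) T t := by
    have := (((hasDerivAt_id t).sub_const x).smul_const T).const_add (Γ x)
    simpa using this
  apply h1.congr_of_eventuallyEq
  filter_upwards [Ioo_mem_nhds ht.1 ht.2] with s hs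
  exact haff s ⟨hs.1.le, hs.2.le⟩

omit H in
lemma chord_vals {x y : ℝ} {T : E3} (hT : ‖T‖ = 1) (haff : ∀ t ∈ Icc x y, Γ t = Γ x + (t - x) • T) {t : ℝ}
    (ht : t ∈ Icc x y) : ⟪Γ t, T⟫ = ⟪Γ x, T⟫ + (t - x) ∧
      ‖Γ t‖^2 = ‖Γ x‖^2 - ⟪Γ x, T⟫^2 + (⟪Γ x, T⟫ + (t - x))^2 := by
  rw [haff t ht]
  constructor
  · rw [inner_add_left, inner_smul_left, real_inner_self_eq_norm_sq, hT]; simp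
  · rw [norm_add_sq_real, inner_smul_right, norm_smul, hT]
    simp; ring

omit H in
lemma chord_GG {x y : ℝ} (hxy : x ≤ y) {T : E3} (hT : ‖T‖ = 1)
    (haff : ∀ t ∈ Icc x y, Γ t = Γ x + (t - x) • T)
    (hi : IntervalIntegrable (GG Γ) volume x y) :
    ∫ t in x..y, GG Γ t = PP (‖Γ y‖^2) * ⟪Γ y, T⟫ - PP (‖Γ x‖^2) * ⟪Γ x, T⟫ := by
  set h0 := ⟪Γ x, T⟫ with hh0
  set d := ‖Γ x‖^2 - h0^2 with hd
  set F : ℝ → ℝ := fun t => PP (d + (h0 + (t - x))^2) * (h0 + (t - x)) with hF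
  have hFd : ∀ t, HasDerivAt F (PP (d + (h0 + (t - x))^2) + 2 * PPd (d + (h0 + (t - x))^2) * (h0 + (t - x))^2) t := by
    intro t
    have h1 : HasDerivAt (fun t => h0 + (t - x)) 1 t := ((hasDerivAt_id t).sub_const x).const_add h0
    have h2 : HasDerivAt (fun t => d + (h0 + (t - x))^2) (2 * (h0 + (t - x))) t := by
      have := (h1.pow 2).const_add d
      simpa using this
    have h3 := (hasDerivAt_PP (d + (h0 + (t - x))^2)).comp t h2
    have h4 := h3.mul h1
    refine h4.congr_deriv ?_
    simp only [Function.comp]; ring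
  have hv : ∀ t ∈ Icc x y, PP (‖Γ t‖^2) * ⟪Γ t, T⟫ = F t := by
    intro t ht
    obtain ⟨e1, e2⟩ := chord_vals hT haff ht
    rw [e1, e2]
  rw [hv y ⟨hxy, le_rfl⟩, hv x ⟨le_rfl, hxy⟩]
  apply intervalIntegral.integral_eq_sub_of_hasDerivAt_of_le hxy
  · exact (continuous_iff_continuousAt.2 fun t => (hFd t).continuousAt).continuousOn
  · intro t ht
    refine (hFd t).congr_deriv ?_
    obtain ⟨e1, e2⟩ := chord_vals hT haff ⟨ht.1.le, ht.2.le⟩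
    unfold GG
    rw [(chord_deriv haff ht).deriv, e1, e2]
  · exact hi

lemma chord_DD {x y : ℝ} (hxy : x < y) (hx : x ∈ Ex Γ) (hy : y ∈ Ex Γ) {T : E3} (hT : ‖T‖ = 1)
    (haff : ∀ t ∈ Icc x y, Γ t = Γ x + (t - x) • T)
    (hδ : ‖Γ x‖ ^ 2 - ⟪Γ x, T⟫ ^ 2 < 1) :
    0 ≤ ∫ t in x..y, DD Γ t ∧
    (‖Γ x‖ ^ 2 - ⟪Γ x, T⟫ ^ 2 = 0 → 2 ≤ ∫ t in x..y, DD Γ t) := by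
  obtain ⟨hs1, hs2⟩ := H.chord_sign hxy hx hy hT haff hδ
  set z := x - ⟪Γ x, T⟫ with hz
  have hxz : x ≤ z := by linarith
  have hzy : z ≤ y := by linarith
  have hzm : z ∈ Icc x y := ⟨hxz, hzy⟩
  obtain ⟨e1, e2⟩ := chord_vals hT haff hzm
  obtain ⟨f1, f2⟩ := chord_vals hT haff (t := y) ⟨hxy.le, le_rfl⟩
  have hzn : ‖Γ z‖ ≤ 1 := by
    have : ‖Γ z‖^2 ≤ 1 := by rw [e2, hz]; nlinarith
    nlinarith [norm_nonneg (Γ z)]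
  have hnx := H.one_le_norm hx
  have hny := H.one_le_norm hy
  have g1 := half_chord H.lip hxz (fun t ht => chord_deriv haff ⟨ht.1, ht.2.trans_le hzy⟩) hnx
    (Or.inr ⟨hzn, rfl⟩)
  have g2 := half_chord H.lip hzy (fun t ht => chord_deriv haff ⟨hxz.trans_lt ht.1, ht.2⟩) hny
    (Or.inl ⟨hzn, rfl⟩)
  have hq : ∀ r : ℝ, 1 ≤ r → 0 ≤ 1 - 1/r := by
    intro r hr
    have : 1/r ≤ 1 := by rw [div_le_one (by linarith)]; exact hr
    linarith
  have g1' := (mul_le_mul_of_nonneg_left g1 NN_pos.le).trans (NN_half (hq _ hnx))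
  have g2' := (mul_le_mul_of_nonneg_left g2 NN_pos.le).trans (NN_half (hq _ hny))
  have hD := H.DD_eq x y
  rw [chord_GG hxy.le hT haff (H.GG_int x y), 
    ← intervalIntegral.integral_add_adjacent_intervals (H.RR_ii x z) (H.RR_ii z y)] at hD
  set hxx := ⟪Γ x, T⟫ with hhx
  set hyy := ⟪Γ y, T⟫ with hhy
  have hsum : cc * (y - x) = cc * (-hxx) + cc * hyy := by rw [f1]; ring
  rw [hsum, mul_add] at hD
  have hyd : ‖Γ y‖^2 - hyy^2 = ‖Γ x‖^2 - hxx^2 := by rw [f1]; linarith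
  have hyp : 0 < hyy := by rw [f1]; exact hs2
  constructor
  · have k1 := hc_bound (r := ‖Γ x‖) (h := -hxx) hnx (by linarith) (by nlinarith)
    have k2 := hc_bound (r := ‖Γ y‖) (h := hyy) hny hyp.le (by linarith)
    rw [hD]; linarith
  · intro h0
    have k1 := hc_center (r := ‖Γ x‖) hnx
    have k2 := hc_center (r := ‖Γ y‖) hny
    have q1 : ‖Γ x‖ = -hxx := by
      have : ‖Γ x‖^2 = (-hxx)^2 := by linarith
      exact (pow_left_inj₀ (norm_nonneg _) (by linarith) two_ne_zero).1 this
    have q2 : ‖Γ y‖ = hyy := by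
      have : ‖Γ y‖^2 = (hyy)^2 := by linarith
      exact (pow_left_inj₀ (norm_nonneg _) (by linarith) two_ne_zero).1 this
    rw [hD]
    have e3 : PP (‖Γ x‖^2) * ‖Γ x‖ = - (PP (‖Γ x‖^2) * hxx) := by
      nth_rewrite 2 [q1]; ring
    have e4 : PP (‖Γ y‖^2) * ‖Γ y‖ = PP (‖Γ y‖^2) * hyy := by
      nth_rewrite 2 [q2]; ring
    have e5 : cc * ‖Γ x‖ = cc * (-hxx) := by rw [q1]
    have e6 : cc * ‖Γ y‖ = cc * hyy := by rw [q2]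
    linarith

/-- bad chords -/
def _root_.BadC (Γ : ℝ → E3) (s0 s1 : ℝ) : Set (ℝ × ℝ) := {p | s0 ≤ p.1 ∧ p.2 ≤ s1 ∧ p.1 < p.2 ∧
  p.1 ∈ Ex Γ ∧ p.2 ∈ Ex Γ ∧ (∀ s ∈ Ioo p.1 p.2, s ∉ Ex Γ) ∧
  ∃ T : E3, ‖T‖ = 1 ∧ (∀ t ∈ Icc p.1 p.2, Γ t = Γ p.1 + (t - p.1) • T) ∧ 
    ‖Γ p.1‖ ^ 2 - ⟪Γ p.1, T⟫ ^ 2 < 1}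

lemma pt_DD {t : ℝ} (hv1 : ‖deriv Γ t‖ = 1) (hr : 1 ≤ ‖Γ t‖)
    (hh : ⟪Γ t, deriv Γ t⟫^2 ≤ ‖Γ t‖^2 - 1) : 0 ≤ DD Γ t := by
  have h1 := RRg_le hr hv1
  have h2 := pt_bound hr hh
  have h3 := mul_le_mul_of_nonneg_left h1 NN_pos.le
  have h4 := NN_pt (r := ‖Γ t‖) (J := JJ |⟪Γ t, deriv Γ t⟫| (√(‖Γ t‖^2 - 1) * √(‖Γ t‖^2 - ⟪Γ t, deriv Γ t⟫^2))) (by linarith) (JJ_nonneg (abs_nonneg _))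
  have h5 : NN * RR Γ t ≤ _ := h3.trans h4
  unfold DD GG
  linarith

lemma mem_bad {s0 t : ℝ} (h0 : s0 ∈ Ex Γ) (ht : t ∈ Ioc s0 (s0 + L)) (hE : t ∉ Ex Γ) :
    ∃ x y T, x < t ∧ t < y ∧ ‖T‖ = 1 ∧ (∀ t ∈ Icc x y, Γ t = Γ x + (t - x) • T) ∧ 
      (‖Γ x‖ ^ 2 - ⟪Γ x, T⟫ ^ 2 < 1 → (x, y) ∈ BadC Γ s0 (s0 + L)) := by
  obtain ⟨x, y, hx, hy, hxt, hty, hyL, hno⟩ := H.exists_chord hE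
  obtain ⟨T, hT, haff⟩ := H.chord_affine (hxt.trans hty) hyL hno
  have h1 : s0 + L ∈ Ex Γ := by simpa using H.Ex_add 1 h0
  refine ⟨x, y, T, hxt, hty, hT, haff, fun hδ => ⟨?_, ?_, hxt.trans hty, hx, hy, hno, T, hT, haff, hδ⟩⟩
  · by_contra hc
    exact hno s0 ⟨not_le.1 hc, ht.1.trans hty⟩ h0
  · by_contra hc
    exact hno (s0 + L) ⟨hxt.trans_le ht.2, not_le.1 hc⟩ h1

theorem ne_zero (hσ : tau^2 ≤ σ) (hL4 : L ≤ 4 * π * tau^2) (t0 : ℝ) : Γ t0 ≠ 0 := by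
  intro hz
  obtain ⟨s0, hs0⟩ := H.Ex_nonempty
  have hLp := H.Lpos
  -- move t0
  obtain ⟨k, hk⟩ := H.exists_rep s0 t0
  have hz' : Γ (t0 + k * L) = 0 := by rw [H.per_int]; exact hz
  set t1 := t0 + k * L with ht1
  have hE1 : t1 ∉ Ex Γ := by
    intro h; have := H.one_le_norm h; rw [hz'] at this; norm_num at this
  obtain ⟨x, y, T, hxt, hty, hT, haff, hbad⟩ := H.mem_bad hs0 hk hE1
  have hδ0 : ‖Γ x‖ ^ 2 - ⟪Γ x, T⟫ ^ 2 = 0 := by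
    obtain ⟨e1, e2⟩ := chord_vals hT haff (t := t1) ⟨hxt.le, hty.le⟩
    rw [hz'] at e1 e2
    simp only [inner_zero_left, norm_zero] at e1 e2
    rw [← e1] at e2; linarith
  have hmem := hbad (by rw [hδ0]; norm_num)
  set I := BadC Γ s0 (s0 + L) with hI
  set U : Set ℝ := ⋃ p : I, Ioo p.1.1 p.1.2 with hU
  have hdisj : Pairwise (Function.onFun Disjoint (fun p : I => Ioo p.1.1 p.1.2)) := by
    rintro ⟨⟨x1, y1⟩, hp⟩ ⟨⟨x2, y2⟩, hq⟩ hne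
    rw [Function.onFun, Set.disjoint_left]
    rintro t ⟨ha, hb⟩ ⟨hc, hd⟩
    apply hne
    replace ha : x1 < t := ha
    replace hb : t < y1 := hb
    replace hc : x2 < t := hc
    replace hd : t < y2 := hd
    obtain ⟨-, -, -, p1, p2, p3, -⟩ := hp
    obtain ⟨-, -, -, q1, q2, q3, -⟩ := hq
    replace p1 : x1 ∈ Ex Γ := p1
    replace p2 : y1 ∈ Ex Γ := p2
    replace q1 : x2 ∈ Ex Γ := q1
    replace q2 : y2 ∈ Ex Γ := q2
    have ex : x1 = x2 := by
      rcases lt_trichotomy x1 x2 with h | h | h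
      · exact absurd q1 (p3 x2 ⟨h, hc.trans hb⟩)
      · exact h
      · exact absurd p1 (q3 x1 ⟨h, ha.trans hd⟩)
    have ey : y1 = y2 := by
      rcases lt_trichotomy y1 y2 with h | h | h
      · exact absurd p2 (q3 y1 ⟨hc.trans hb, h⟩)
      · exact h
      · exact absurd q2 (p3 y2 ⟨ha.trans hd, h⟩)
    subst ex; subst ey; rfl
  have hcount : Countable I := by
    exact hdisj.countable_of_isOpen_disjoint (fun p => isOpen_Ioo) (fun p => nonempty_Ioo.2 p.2.2.2.1)
  have hUsub : U ⊆ Ioc s0 (s0 + L) := by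
    apply iUnion_subset
    rintro ⟨p, hp⟩ t ht
    exact ⟨hp.1.trans_lt ht.1, ht.2.le.trans hp.2.1⟩
  have hUm : MeasurableSet U := MeasurableSet.iUnion fun p => measurableSet_Ioo
  have hintg : IntegrableOn (DD Γ) (Ioc s0 (s0 + L)) := (H.DD_ii s0 (s0 + L)).1
  have hsum := hasSum_integral_iUnion (μ := volume) (f := DD Γ) (fun p : I => measurableSet_Ioo (a := p.1.1) (b := p.1.2))
    hdisj (hintg.mono_set hUsub)
  have hterm : ∀ p : I, ∫ t in Ioo p.1.1 p.1.2, DD Γ t = ∫ t in p.1.1..p.1.2, DD Γ t := by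
    intro p
    rw [intervalIntegral.integral_of_le p.2.2.2.1.le, integral_Ioc_eq_integral_Ioo]
  have hnn : ∀ p : I, 0 ≤ ∫ t in Ioo p.1.1 p.1.2, DD Γ t := by
    intro p
    rw [hterm]
    obtain ⟨-, -, p0, p1, p2, p3, T, q1, q2, q3⟩ := p.2
    exact (H.chord_DD p0 p1 p2 q1 q2 q3).1
  have hU2 : 2 ≤ ∫ t in U, DD Γ t := by
    have h1 := le_hasSum hsum ⟨(x, y), hmem⟩ (fun j _ => hnn j)
    rw [hterm] at h1
    refine le_trans ?_ h1
    have hm2 := hmem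
    obtain ⟨-, -, p0, p1, p2, p3, -⟩ := hm2
    exact (H.chord_DD p0 p1 p2 hT haff (by rw [hδ0]; norm_num)).2 hδ0
  have hrest : 0 ≤ ∫ t in Ioc s0 (s0 + L) \ U, DD Γ t := by
    apply integral_nonneg_of_ae
    have h1 := ae_restrict_of_ae_restrict_of_subset (sdiff_subset (t := U)) (H.unit_speed s0)
    filter_upwards [h1, ae_restrict_mem (measurableSet_Ioc.diff hUm)] with t hv htm
    have hdiff : DifferentiableAt ℝ Γ t := by
      by_contra hc
      rw [deriv_zero_of_not_differentiableAt hc] at hv; norm_num at hv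
    by_cases hE : t ∈ Ex Γ
    · exact H.pt_DD hv (H.one_le_norm hE) (H.Ex_pointwise hE hdiff.hasDerivAt hv.le)
    · obtain ⟨x, y, T, hxt, hty, hT, haff, hbad⟩ := H.mem_bad hs0 htm.1 hE
      have hge : 1 ≤ ‖Γ x‖ ^ 2 - ⟪Γ x, T⟫ ^ 2 := by
        by_contra hc
        apply htm.2
        exact mem_iUnion.2 ⟨⟨(x, y), hbad (not_le.1 hc)⟩, hxt, hty⟩
      obtain ⟨e1, e2⟩ := chord_vals hT haff (t := t) ⟨hxt.le, hty.le⟩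
      have hd := (chord_deriv haff ⟨hxt, hty⟩ : HasDerivAt Γ T t).deriv
      apply H.pt_DD hv
      · nlinarith [sq_nonneg (⟪Γ x, T⟫ + (t - x)), norm_nonneg (Γ t)]
      · rw [hd, e1, e2]; linarith
  have htot : 2 ≤ ∫ t in s0..s0 + L, DD Γ t := by
    rw [intervalIntegral.integral_of_le (by linarith)]
    have := setIntegral_union (μ := volume) (f := DD Γ) (disjoint_sdiff_self_right : Disjoint U (Ioc s0 (s0 + L) \ U))
      (measurableSet_Ioc.diff hUm) (hintg.mono_set hUsub) (hintg.mono_set sdiff_subset)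
    rw [union_sdiff_cancel hUsub] at this
    rw [this]; linarith
  rw [H.DD_eq] at htot
  have hc := mul_le_mul_of_nonneg_left (H.cover hσ hz s0) NN_pos.le
  rw [NN_cover] at hc
  have hg : 0 ≤ ∫ t in s0..s0 + L, GG Γ t := H.first_var s0
  rw [add_sub_cancel_left] at htot
  have hpi := pi_lt_d4
  have hpi2 := pi_pos
  have : cc * L ≤ cc * (4 * π * tau^2) := by
    unfold cc; linarith
  have h2 : cc * (4 * π * tau^2) < 8 * π + 2 := by
    norm_num [cc, tau]; linarith
  linarith

end NC

lemma eVar_smul_le (c : ℝ≥0) (β : ℝ → E3) (s : Set ℝ) :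
    eVariationOn (fun t => (c : ℝ) • β t) s ≤ c * eVariationOn β s := by
  have h : LipschitzWith c (fun x : E3 => (c : ℝ) • x) := by
    refine LipschitzWith.of_dist_le_mul fun x y => ?_
    rw [dist_smul₀]; simp
  exact (h.lipschitzOnWith (s := univ)).comp_eVariationOn_le (g := β) (fun _ _ => mem_univ _)

lemma min_support {a b : ℝ} {γ : ℝ → E3} (hmin : IsMinimalInspection a b γ)
    {c d : ℝ} {β : ℝ → E3} (hcd : c < d) (hc : ContinuousOn β (Icc c d)) (hcl : β c = β d)
    (hs : ∀ n : E3, ∃ s ∈ Icc c d, ‖n‖ ≤ ⟪n, β s⟫) :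
    eVariationOn γ (Icc a b) ≤ eVariationOn β (Icc c d) := by
  rcases eq_or_ne (eVariationOn β (Icc c d)) ⊤ with htop | htop
  · rw [htop]; exact le_top
  have key : ∀ k : ℝ≥0, 1 < k → eVariationOn γ (Icc a b) ≤ k * eVariationOn β (Icc c d) := by
    intro k hk
    have hk' : (1 : ℝ) < k := by exact_mod_cast hk
    refine (hmin.2 c d (fun t => (k : ℝ) • β t) ⟨hcd, by fun_prop, by simp [hcl], ?_, ?_⟩).trans
      (eVar_smul_le k β _)
    · exact ne_top_of_le_ne_top (ENNReal.mul_ne_top ENNReal.coe_ne_top htop) (eVar_smul_le k β _)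
    · refine Subset.trans ?_ (ball_sub_of_support (σ := k) (by linarith) ?_)
      · intro x hx
        rw [mem_sphere_zero_iff_norm] at hx
        rw [mem_ball_zero_iff, hx]; exact hk'
      · intro n
        obtain ⟨s, hs1, hs2⟩ := hs n
        refine ⟨(k : ℝ) • β s, ⟨s, hs1, rfl⟩, ?_⟩
        rw [inner_smul_right]
        exact mul_le_mul_of_nonneg_left hs2 (by linarith)
  set A := eVariationOn γ (Icc a b) with hA
  set B := eVariationOn β (Icc c d) with hB
  have hAt : A ≠ ⊤ := hmin.1.2.2.2.1
  rw [← ENNReal.toReal_le_toReal hAt htop]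
  apply le_of_forall_pos_le_add
  intro ε hε
  have hBn : 0 ≤ B.toReal := ENNReal.toReal_nonneg
  have h1 := key (1 + (ε / (B.toReal + 1)).toNNReal) (by
    have : 0 < (ε / (B.toReal + 1)).toNNReal := Real.toNNReal_pos.2 (by positivity)
    exact lt_add_of_pos_right _ this)
  have h2 := ENNReal.toReal_mono (ENNReal.mul_ne_top ENNReal.coe_ne_top htop) h1
  rw [ENNReal.toReal_mul, ENNReal.coe_toReal, NNReal.coe_add, Real.coe_toNNReal _ (by positivity)] at h2
  have h3 : ε / (B.toReal + 1) * B.toReal ≤ ε := by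
    rw [div_mul_eq_mul_div, div_le_iff₀ (by positivity)]
    nlinarith
  simp only [NNReal.coe_one] at h2
  linarith

/-- Comparison with a rescaled curve. -/
lemma min_sigma {a b : ℝ} {γ : ℝ → E3} (hmin : IsMinimalInspection a b γ) {σ : ℝ} (hσ : 0 < σ)
    {c d : ℝ} {β : ℝ → E3} (hcd : c < d) (hc : ContinuousOn β (Icc c d)) (hcl : β c = β d)
    (hs : ∀ n : E3, ∃ s ∈ Icc c d, σ * ‖n‖ ≤ ⟪n, β s⟫) :
    ENNReal.ofReal σ * eVariationOn γ (Icc a b) ≤ eVariationOn β (Icc c d) := by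
  have hi : 0 < σ⁻¹ := inv_pos.2 hσ
  have h1 := min_support hmin (β := fun t => ((σ⁻¹).toNNReal : ℝ) • β t) hcd (by fun_prop)
    (by simp [hcl]) (by
      intro n
      obtain ⟨s, hs1, hs2⟩ := hs n
      refine ⟨s, hs1, ?_⟩
      rw [inner_smul_right, Real.coe_toNNReal _ hi.le, inv_mul_eq_div, le_div_iff₀ hσ]
      linarith)
  have h2 := h1.trans (eVar_smul_le _ β _)
  calc ENNReal.ofReal σ * eVariationOn γ (Icc a b)
      ≤ ENNReal.ofReal σ * (((σ⁻¹).toNNReal : ℝ≥0) * eVariationOn β (Icc c d)) := by gcongr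
    _ = (ENNReal.ofReal σ * ENNReal.ofReal σ⁻¹) * eVariationOn β (Icc c d) := by
        rw [mul_assoc]; rfl
    _ = _ := by rw [← ENNReal.ofReal_mul hσ.le, mul_inv_cancel₀ hσ.ne']; simp

/-- The baseball seam. -/
def bby (t : ℝ) : ℝ := -cos (max 0 (min t π)) + cos (max (2*π) (min t (3*π))) - 1
def bbz (t : ℝ) : ℝ := -cos (max π (min t (2*π))) + cos (max (3*π) (min t (4*π))) + 1
def bb (t : ℝ) : E3 := !₂[sin t, bby t, bbz t]

lemma c2 : cos (2 * π) = 1 := cos_two_pi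
lemma c3 : cos (3 * π) = -1 := by
  rw [show 3 * π = 2 * π + π by ring, cos_add_pi, cos_two_pi]
lemma c4 : cos (4 * π) = 1 := by
  rw [show 4 * π = 3 * π + π by ring, cos_add_pi, c3]; norm_num

lemma bby1 {t : ℝ} (h : t ∈ Icc 0 π) : bby t = -cos t := by
  have := pi_pos
  unfold bby
  rw [min_eq_left h.2, max_eq_right h.1, min_eq_left (by linarith [h.2]), max_eq_left (by linarith [h.2]), c2]; ring
lemma bbz1 {t : ℝ} (h : t ∈ Icc 0 π) : bbz t = 1 := by
  have := pi_pos
  unfold bbz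
  rw [min_eq_left (by linarith [h.2]), max_eq_left h.2, min_eq_left (by linarith [h.2]), max_eq_left (by linarith [h.2]), c3, cos_pi]; ring
lemma bby2 {t : ℝ} (h : t ∈ Icc π (2*π)) : bby t = 1 := by
  have := pi_pos
  unfold bby
  rw [min_eq_right h.1, max_eq_right this.le, min_eq_left (by linarith [h.2]), max_eq_left (by linarith [h.2]), c2, cos_pi]; ring
lemma bbz2 {t : ℝ} (h : t ∈ Icc π (2*π)) : bbz t = -cos t := by
  have := pi_pos
  unfold bbz
  rw [min_eq_left (by linarith [h.2]), max_eq_right h.1, min_eq_left (by linarith [h.2]), max_eq_left (by linarith [h.2]), c3]; ring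
lemma bby3 {t : ℝ} (h : t ∈ Icc (2*π) (3*π)) : bby t = cos t := by
  have := pi_pos
  unfold bby
  rw [min_eq_right (by linarith [h.1]), max_eq_right this.le, min_eq_left (by linarith [h.2]), max_eq_right (by linarith [h.1]), cos_pi]; ring
lemma bbz3 {t : ℝ} (h : t ∈ Icc (2*π) (3*π)) : bbz t = -1 := by
  have := pi_pos
  unfold bbz
  rw [min_eq_right (by linarith [h.1]), max_eq_right (by linarith), min_eq_left (by linarith [h.2]), max_eq_left (by linarith [h.2]), c3, c2]; ring
lemma bby4 {t : ℝ} (h : t ∈ Icc (3*π) (4*π)) : bby t = -1 := by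
  have := pi_pos
  unfold bby
  rw [min_eq_right (by linarith [h.1]), max_eq_right this.le, min_eq_right (by linarith [h.1]), max_eq_right (by linarith [h.1]), cos_pi, c3]; ring
lemma bbz4 {t : ℝ} (h : t ∈ Icc (3*π) (4*π)) : bbz t = cos t := by
  have := pi_pos
  unfold bbz
  rw [min_eq_right (by linarith [h.1]), max_eq_right (by linarith), min_eq_left (by linarith [h.2]), max_eq_right (by linarith [h.1]), c2]; ring

lemma circ_le (s t : ℝ) : (sin s - sin t)^2 + (cos s - cos t)^2 ≤ (s - t)^2 := by
  have h : (sin s - sin t)^2 + (cos s - cos t)^2 = 2 - 2 * cos (s - t) := by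
    rw [cos_sub]; nlinarith [sin_sq_add_cos_sq s, sin_sq_add_cos_sq t]
  rw [h]
  linarith [one_sub_sq_div_two_le_cos (x := s - t)]

lemma piece {u v : ℝ} (h : ∀ s ∈ Icc u v, ∀ t ∈ Icc u v,
    (bby s - bby t)^2 + (bbz s - bbz t)^2 = (cos s - cos t)^2) :
    eVariationOn bb (Icc u v) ≤ ENNReal.ofReal (v - u) := by
  rcases lt_or_ge v u with hvu | huv
  · rw [Icc_eq_empty (not_le.2 hvu)]
    simp
  have h1 : eVariationOn bb (Icc u v) ≤ eVariationOn (fun t : ℝ => t) (Icc u v) := by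
    apply eVar_le_of_edist_le
    intro x hx y hy hxy
    rw [edist_dist, edist_dist]
    apply ENNReal.ofReal_le_ofReal
    rw [EuclideanSpace.dist_eq, Real.dist_eq, ← Real.sqrt_sq_eq_abs]
    apply Real.sqrt_le_sqrt
    simp only [Fin.sum_univ_three, Real.dist_eq, sq_abs, bb]
    have := h y hy x hx
    have := circ_le y x
    simp
    linarith
  refine h1.trans ?_
  have h2 := (monotone_id.monotoneOn (Icc u v)).eVariationOn_le (left_mem_Icc.2 huv) (right_mem_Icc.2 huv)
  rw [inter_self] at h2
  exact h2

lemma bb_var : eVariationOn bb (Icc 0 (4*π)) ≤ ENNReal.ofReal (4*π) := by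
  have hp := pi_pos
  have hadd : ∀ x y z : ℝ, x ≤ y → y ≤ z → eVariationOn bb (Icc x z) =
      eVariationOn bb (Icc x y) + eVariationOn bb (Icc y z) := by
    intro x y z h1 h2
    have := eVariationOn.Icc_add_Icc bb (s := univ) h1 h2 (mem_univ _)
    simpa using this.symm
  rw [hadd 0 (2*π) (4*π) (by linarith) (by linarith), hadd 0 π (2*π) (by linarith) (by linarith),
    hadd (2*π) (3*π) (4*π) (by linarith) (by linarith)]
  have p1 : eVariationOn bb (Icc 0 π) ≤ ENNReal.ofReal π := by
    have := piece (u := 0) (v := π) (fun s hs t ht => by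
      rw [bby1 hs, bby1 ht, bbz1 hs, bbz1 ht]; ring)
    rwa [sub_zero] at this
  have p2 : eVariationOn bb (Icc π (2*π)) ≤ ENNReal.ofReal π := by
    have := piece (u := π) (v := 2*π) (fun s hs t ht => by
      rw [bby2 hs, bby2 ht, bbz2 hs, bbz2 ht]; ring)
    rwa [show 2*π - π = π by ring] at this
  have p3 : eVariationOn bb (Icc (2*π) (3*π)) ≤ ENNReal.ofReal π := by
    have := piece (u := 2*π) (v := 3*π) (fun s hs t ht => by
      rw [bby3 hs, bby3 ht, bbz3 hs, bbz3 ht]; ring)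
    rwa [show 3*π - 2*π = π by ring] at this
  have p4 : eVariationOn bb (Icc (3*π) (4*π)) ≤ ENNReal.ofReal π := by
    have := piece (u := 3*π) (v := 4*π) (fun s hs t ht => by
      rw [bby4 hs, bby4 ht, bbz4 hs, bbz4 ht]; ring)
    rwa [show 4*π - 3*π = π by ring] at this
  refine (add_le_add (add_le_add p1 p2) (add_le_add p3 p4)).trans ?_
  rw [← ENNReal.ofReal_add hp.le hp.le, ← ENNReal.ofReal_add (by linarith) (by linarith)]
  apply ENNReal.ofReal_le_ofReal; linarith

lemma polar_half {p q : ℝ} (hp : 0 ≤ p) : ∃ u ∈ Icc 0 π, p = √(p^2+q^2) * sin u ∧ q = -√(p^2+q^2) * cos u := by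
  rcases eq_or_ne (√(p^2+q^2)) 0 with h0 | h0
  · have h1 : p^2 + q^2 = 0 := by
      rwa [Real.sqrt_eq_zero (by positivity)] at h0
    have hp0 : p = 0 := by nlinarith [sq_nonneg p, sq_nonneg q]
    have hq0 : q = 0 := by nlinarith [sq_nonneg p, sq_nonneg q]
    exact ⟨0, ⟨le_rfl, pi_pos.le⟩, by simp [hp0], by simp [hp0, hq0]⟩
  set ρ := √(p^2+q^2) with hρ
  have hρp : 0 < ρ := lt_of_le_of_ne (Real.sqrt_nonneg _) (Ne.symm h0)
  have hρ2 : ρ^2 = p^2 + q^2 := Real.sq_sqrt (by positivity)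
  have hle : |q| ≤ ρ := abs_le_of_sq_le_sq (by nlinarith) hρp.le
  have hq := abs_le.1 hle
  refine ⟨arccos (-q/ρ), ⟨arccos_nonneg _, arccos_le_pi _⟩, ?_, ?_⟩
  · rw [sin_arccos]
    have : 1 - (-q/ρ)^2 = (p/ρ)^2 := by
      field_simp; linarith
    rw [this, Real.sqrt_sq (by positivity)]; field_simp
  · rw [cos_arccos]
    · field_simp
    · rw [le_div_iff₀ hρp]; linarith
    · rw [div_le_iff₀ hρp]; linarith

lemma bb_inner (n : E3) (t : ℝ) : ⟪n, bb t⟫ = n 0 * sin t + n 1 * bby t + n 2 * bbz t := by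
  rw [PiLp.inner_apply, Fin.sum_univ_three]
  simp [bb]; ring

lemma bb_norm_le (n : E3) {x y z : ℝ} (h : n 0^2 + n 1^2 + n 2^2 = x^2 + y^2 + z^2) : ‖n‖ ≤ √(x^2+y^2) + |z| := by
  rw [EuclideanSpace.norm_eq, Fin.sum_univ_three]
  simp only [Real.norm_eq_abs, sq_abs]
  apply Real.sqrt_le_iff.2
  refine ⟨by positivity, ?_⟩
  have h1 : √(x^2+y^2)^2 = x^2+y^2 := Real.sq_sqrt (by positivity)
  nlinarith [sq_abs z, mul_nonneg (Real.sqrt_nonneg (x^2+y^2)) (abs_nonneg z)]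

lemma bb_support (n : E3) : ∃ s ∈ Icc 0 (4*π), ‖n‖ ≤ ⟪n, bb s⟫ := by
  have hpi := pi_pos
  rcases le_total 0 (n 0) with h0 | h0
  · obtain ⟨u, hu, e1, e2⟩ := polar_half (p := n 0) (q := n 1) h0
    have hn := bb_norm_le n (x := n 0) (y := n 1) (z := n 2) rfl
    set ρ := √(n 0^2 + n 1^2) with hρ
    have hs := sin_sq_add_cos_sq u
    have hval : n 0 * sin u - n 1 * cos u = ρ := by
      rw [e1, e2]; linear_combination ρ * hs
    rcases le_total 0 (n 2) with h2 | h2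
    · refine ⟨u, ⟨hu.1, by linarith [hu.2]⟩, ?_⟩
      rw [bb_inner, bby1 hu, bbz1 hu]
      rw [abs_of_nonneg h2] at hn
      linarith
    · have hm : 3*π - u ∈ Icc (2*π) (3*π) := ⟨by linarith [hu.2], by linarith [hu.1]⟩
      refine ⟨3*π - u, ⟨by linarith [hm.1], by linarith [hm.2]⟩, ?_⟩
      have es : sin (3*π - u) = sin u := by
        rw [show 3*π - u = π - u + 2*π by ring, sin_add_two_pi, sin_pi_sub]
      have ec : cos (3*π - u) = -cos u := by
        rw [show 3*π - u = π - u + 2*π by ring, cos_add_two_pi, cos_pi_sub]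
      rw [bb_inner, bby3 hm, bbz3 hm, es, ec]
      rw [abs_of_nonpos h2] at hn
      linarith
  · obtain ⟨u, hu, e1, e2⟩ := polar_half (p := -n 0) (q := n 2) (by linarith)
    have hn := bb_norm_le n (x := -n 0) (y := n 2) (z := n 1) (by ring)
    set ρ := √((-n 0)^2 + n 2^2) with hρ
    have hs := sin_sq_add_cos_sq u
    have hval : (-n 0) * sin u - n 2 * cos u = ρ := by
      rw [e1, e2]; linear_combination ρ * hs
    rcases le_total 0 (n 1) with h2 | h2
    · have hm : 2*π - u ∈ Icc π (2*π) := ⟨by linarith [hu.2], by linarith [hu.1]⟩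
      refine ⟨2*π - u, ⟨by linarith [hm.1], by linarith [hm.2]⟩, ?_⟩
      rw [bb_inner, bby2 hm, bbz2 hm, sin_two_pi_sub, cos_two_pi_sub]
      rw [abs_of_nonneg h2] at hn
      linarith
    · have hm : u + 3*π ∈ Icc (3*π) (4*π) := ⟨by linarith [hu.1], by linarith [hu.2]⟩
      refine ⟨u + 3*π, ⟨by linarith [hm.1], by linarith [hm.2]⟩, ?_⟩
      have es : sin (u + 3*π) = -sin u := by
        rw [show u + 3*π = u + π + 2*π by ring, sin_add_two_pi, sin_add_pi]
      have ec : cos (u + 3*π) = -cos u := by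
        rw [show u + 3*π = u + π + 2*π by ring, cos_add_two_pi, cos_add_pi]
      rw [bb_inner, bby4 hm, bbz4 hm, es, ec]
      rw [abs_of_nonpos h2] at hn
      linarith

lemma bb_cont : Continuous bb := by
  unfold bb bby bbz
  fun_prop

lemma bb_closed : bb 0 = bb (4*π) := by
  have hpi := pi_pos
  have m0 : (0:ℝ) ∈ Icc 0 π := ⟨le_rfl, hpi.le⟩
  have m4 : 4*π ∈ Icc (3*π) (4*π) := ⟨by linarith, le_rfl⟩
  have s4 : sin (4*π) = 0 := by
    rw [show 4*π = 2*π + 2*π by ring, sin_add_two_pi, sin_two_pi]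
  unfold bb
  rw [bby1 m0, bbz1 m0, bby4 m4, bbz4 m4, c4, s4, sin_zero, cos_zero]

theorem length_le {a b : ℝ} {γ : ℝ → E3} (hmin : IsMinimalInspection a b γ) :
    eVariationOn γ (Icc a b) ≤ ENNReal.ofReal (4*π) :=
  (min_support hmin (by linarith [pi_pos]) bb_cont.continuousOn bb_closed bb_support).trans bb_var

/-- periodic extension with period one -/
def hper (a b : ℝ) (γ : ℝ → E3) (x : ℝ) : E3 := γ (a + (b - a) * Int.fract x)

lemma hper_eq {a b : ℝ} {γ : ℝ → E3} (hcl : γ a = γ b) {x : ℝ} (hx : x ∈ Icc (0:ℝ) 1) :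
    hper a b γ x = γ (a + (b - a) * x) := by
  unfold hper
  rcases eq_or_lt_of_le hx.2 with h | h
  · rw [h, Int.fract_one]; simp [hcl]
  · rw [Int.fract_eq_self.2 ⟨hx.1, h⟩]

lemma speed_lip {a b : ℝ} {γ : ℝ → E3} {C : ℝ≥0} (hs : HasConstantSpeedOnWith γ (Icc a b) C)
    {s t : ℝ} (h1 : a ≤ s) (h2 : s ≤ t) (h3 : t ≤ b) : dist (γ s) (γ t) ≤ C * (t - s) := by
  have hs' : s ∈ Icc a b := ⟨h1, h2.trans h3⟩
  have ht' : t ∈ Icc a b := ⟨h1.trans h2, h3⟩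
  have h := hs hs' ht'
  have h4 : edist (γ s) (γ t) ≤ eVariationOn γ (Icc a b ∩ Icc s t) :=
    eVariationOn.edist_le _ ⟨hs', le_rfl, h2⟩ ⟨ht', h2, le_rfl⟩
  rw [h, edist_dist] at h4
  exact (ENNReal.ofReal_le_ofReal_iff (mul_nonneg C.2 (by linarith))).1 h4

lemma speed_total {a b : ℝ} {γ : ℝ → E3} {C : ℝ≥0} (hab : a < b)
    (hs : HasConstantSpeedOnWith γ (Icc a b) C) :
    eVariationOn γ (Icc a b) = ENNReal.ofReal (C * (b - a)) := by
  have := hs (left_mem_Icc.2 hab.le) (right_mem_Icc.2 hab.le)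
  rwa [inter_self] at this

lemma hper_lip {a b : ℝ} {γ : ℝ → E3} {C : ℝ≥0} (hab : a < b) (hcl : γ a = γ b)
    (hs : HasConstantSpeedOnWith γ (Icc a b) C) {x y : ℝ} (hxy : x ≤ y) :
    dist (hper a b γ x) (hper a b γ y) ≤ C * (b - a) * (y - x) := by
  have hba : 0 < b - a := by linarith
  have fx := Int.fract_nonneg x
  have fx1 := (Int.fract_lt_one x).le
  have fy := Int.fract_nonneg y
  have fy1 := (Int.fract_lt_one y).le
  have ex := Int.floor_add_fract x
  have ey := Int.floor_add_fract y
  have hC : (0:ℝ) ≤ C := C.2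
  have hK : 0 ≤ C * (b - a) := mul_nonneg hC hba.le
  have gen : ∀ u v : ℝ, 0 ≤ u → u ≤ v → v ≤ 1 →
      dist (γ (a + (b - a) * u)) (γ (a + (b - a) * v)) ≤ C * (b - a) * (v - u) := by
    intro u v h1 h2 h3
    have := speed_lip hs (s := a + (b - a) * u) (t := a + (b - a) * v) (by nlinarith) (by nlinarith) (by nlinarith)
    refine this.trans (le_of_eq ?_); ring
  rcases eq_or_lt_of_le (Int.floor_mono hxy) with h | h
  · have h' : ((⌊x⌋ : ℤ) : ℝ) = ⌊y⌋ := by rw [h]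
    have := gen (Int.fract x) (Int.fract y) fx (by linarith) fy1
    unfold hper
    refine this.trans (le_of_eq ?_)
    congr 1; linarith
  · have h' : ((⌊x⌋ : ℤ) : ℝ) + 1 ≤ ⌊y⌋ := by exact_mod_cast h
    have g1 := gen (Int.fract x) 1 fx fx1 le_rfl
    have g2 := gen 0 (Int.fract y) le_rfl fy fy1
    have e1 : a + (b - a) * 1 = b := by ring
    have e2 : a + (b - a) * 0 = a := by ring
    rw [e1] at g1
    rw [e2, hcl] at g2
    unfold hper
    refine (dist_triangle _ (γ b) _).trans ((add_le_add g1 g2).trans ?_)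
    rw [← mul_add]
    exact mul_le_mul_of_nonneg_left (by linarith) hK

lemma insp_support {a b : ℝ} {γ : ℝ → E3} (h : IsInspection a b γ) (n : E3) :
    ∃ s ∈ Icc a b, ‖n‖ ≤ ⟪n, γ s⟫ := by
  obtain ⟨hab, hc, -, -, hs⟩ := h
  obtain ⟨x, ⟨s, hs1, rfl⟩, h2⟩ := support_of_sub (isCompact_Icc.image_of_continuousOn hc)
    ((nonempty_Icc.2 hab.le).image γ) one_pos hs n
  exact ⟨s, hs1, by linarith⟩

lemma speed_pos {a b : ℝ} {γ : ℝ → E3} {C : ℝ≥0} (h : IsInspection a b γ)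
    (hs : HasConstantSpeedOnWith γ (Icc a b) C) : (0:ℝ) < C := by
  rcases eq_or_lt_of_le C.2 with hC | hC
  · exfalso
    have hC0 : (C : ℝ) = 0 := hC.symm
    set n : E3 := EuclideanSpace.single 0 1 with hn
    have hn1 : ‖n‖ = 1 := by simp [hn]
    obtain ⟨s, hs1, hs2⟩ := insp_support h n
    obtain ⟨t, ht1, ht2⟩ := insp_support h (-n)
    have e : ∀ u ∈ Icc a b, γ a = γ u := by
      intro u hu
      have := speed_lip hs le_rfl hu.1 hu.2
      rw [hC0, zero_mul] at this
      exact dist_le_zero.1 this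
    rw [← e s hs1] at hs2
    rw [← e t ht1, inner_neg_left, norm_neg] at ht2
    linarith
  · exact hC

/-- rescaled periodic curve -/
def Gam (a b : ℝ) (γ : ℝ → E3) (L σ : ℝ) (s : ℝ) : E3 := σ • hper a b γ (s / L)

lemma Gam_NC {a b : ℝ} {γ : ℝ → E3} {C : ℝ≥0} (hmin : IsMinimalInspection a b γ)
    (hs : HasConstantSpeedOnWith γ (Icc a b) C) {σ L : ℝ} (hσ : 1 ≤ σ) (hL : L = σ * (C * (b - a))) :
    NC (Gam a b γ L σ) L σ := by
  have hab := hmin.1.1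
  have hcl := hmin.1.2.2.1
  have hC := speed_pos hmin.1 hs
  have hba : 0 < b - a := by linarith
  have hσ0 : 0 < σ := by linarith
  have hK : 0 < C * (b - a) := mul_pos hC hba
  have hLp : 0 < L := by rw [hL]; positivity
  refine ⟨?_, ?_, hLp, hσ, ?_, ?_⟩
  · have key : ∀ x y, x ≤ y → dist (Gam a b γ L σ x) (Gam a b γ L σ y) ≤ y - x := by
      intro x y hxy
      have h1 := hper_lip hab hcl hs (div_le_div_of_nonneg_right hxy hLp.le)
      unfold Gam
      rw [dist_smul₀, Real.norm_eq_abs, abs_of_pos hσ0]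
      refine (mul_le_mul_of_nonneg_left h1 hσ0.le).trans (le_of_eq ?_)
      rw [← mul_assoc, ← hL]; field_simp
    refine LipschitzWith.of_dist_le_mul fun x y => ?_
    rw [NNReal.coe_one, one_mul, Real.dist_eq]
    rcases le_total x y with h | h
    · rw [abs_sub_comm, abs_of_nonneg (by linarith)]; exact key x y h
    · rw [dist_comm, abs_of_nonneg (by linarith)]; exact key y x h
  · intro s
    unfold Gam hper
    rw [add_div, div_self hLp.ne', Int.fract_add_one]
  · intro n
    obtain ⟨s, hs1, hs2⟩ := insp_support hmin.1 n
    refine ⟨L * ((s - a) / (b - a)), ?_⟩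
    unfold Gam
    rw [mul_div_cancel_left₀ _ hLp.ne', hper_eq hcl ⟨div_nonneg (by linarith [hs1.1]) hba.le,
      (div_le_one hba).2 (by linarith [hs1.2])⟩, mul_div_cancel₀ _ hba.ne', add_sub_cancel, inner_smul_right]
    exact mul_le_mul_of_nonneg_left hs2 hσ0.le
  · intro c d β hcd hβ hβc hβs
    have := min_sigma hmin hσ0 hcd hβ hβc hβs
    rw [speed_total hab hs, ← ENNReal.ofReal_mul hσ0.le, ← hL] at this
    exact this

lemma Gam_apply {a b : ℝ} {γ : ℝ → E3} {L σ : ℝ} (hab : a < b) (hcl : γ a = γ b) (hL : 0 < L)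
    {t : ℝ} (ht : t ∈ Icc a b) : Gam a b γ L σ (L / (b - a) * (t - a)) = σ • γ t := by
  have hba : 0 < b - a := by linarith
  unfold Gam
  have e : L / (b - a) * (t - a) / L = (t - a) / (b - a) := by field_simp
  rw [e, hper_eq hcl ⟨div_nonneg (by linarith [ht.1]) hba.le,
      (div_le_one hba).2 (by linarith [ht.2])⟩, mul_div_cancel₀ _ hba.ne', add_sub_cancel]

namespace NC
variable {Γ : ℝ → E3} {L σ : ℝ} (H : NC Γ L σ)
include H

theorem indep (h0 : ∀ t, Γ t ≠ 0) {t : ℝ} {v : E3} (hd : HasDerivAt Γ v t) (hv : ‖v‖ = 1) :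
    ⟪Γ t, v⟫ ^ 2 < ‖Γ t‖ ^ 2 * ‖v‖ ^ 2 := by
  rw [hv, one_pow, mul_one]
  by_cases hE : t ∈ Ex Γ
  · have := H.Ex_pointwise hE hd hv.le; linarith
  obtain ⟨x, y, hx, hy, hxt, hty, hyL, hno⟩ := H.exists_chord hE
  obtain ⟨T, hT, haff⟩ := H.chord_affine (hxt.trans hty) hyL hno
  have hvT : v = T := hd.unique (chord_deriv haff ⟨hxt, hty⟩)
  subst hvT
  obtain ⟨e1, e2⟩ := chord_vals hT haff (t := t) ⟨hxt.le, hty.le⟩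
  have hdec := norm_sq_decomp (u := Γ x) hT
  have hnn : 0 ≤ ‖Γ x‖ ^ 2 - ⟪Γ x, v⟫ ^ 2 := by rw [← hdec]; positivity
  rw [e1, e2]
  rcases eq_or_lt_of_le hnn with hδ | hδ
  · exfalso
    obtain ⟨s1, s2⟩ := H.chord_sign (hxt.trans hty) hx hy hT haff (by rw [← hδ]; norm_num)
    have := (chord_vals hT haff (t := x - ⟪Γ x, v⟫) ⟨by linarith, by linarith⟩).2
    rw [← hδ] at this
    apply h0 (x - ⟪Γ x, v⟫)
    have h3 : ‖Γ (x - ⟪Γ x, v⟫)‖ ^ 2 = 0 := by rw [this]; ring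
    exact norm_eq_zero.1 (pow_eq_zero_iff (two_ne_zero) |>.1 h3)
  · linarith

end NC

lemma null_affine {N : Set ℝ} (hN : volume N = 0) {k : ℝ} (hk : k ≠ 0) (a : ℝ) :
    volume {t : ℝ | k * (t - a) ∈ N} = 0 := by
  have h1 : volume ((fun x => k * x) ⁻¹' N) = 0 := by
    rw [Real.volume_preimage_mul_left hk, hN, mul_zero]
  have h2 := measure_preimage_add_right volume (-a) ((fun x => k * x) ⁻¹' N)
  rw [h1] at h2
  exact h2

section
variable {a b : ℝ} {γ : ℝ → E3} {C : ℝ≥0} (hmin : IsMinimalInspection a b γ)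
  (hs : HasConstantSpeedOnWith γ (Icc a b) C)
include hmin hs

lemma len_real : C * (b - a) ≤ 4 * π := by
  have h := length_le hmin
  rw [speed_total hmin.1.1 hs] at h
  exact (ENNReal.ofReal_le_ofReal_iff (by positivity)).1 h

lemma exists_Gam : ∃ (Γ : ℝ → E3) (L σ : ℝ), NC Γ L σ ∧ 0 < σ ∧ (∀ t, Γ t ≠ 0) ∧
    (∀ t ∈ Icc a b, Γ (L / (b - a) * (t - a)) = σ • γ t) := by
  have hσ : (1:ℝ) ≤ tau^2 := by norm_num [tau]
  have hσ0 : (0:ℝ) < tau^2 := by linarith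
  have hN := Gam_NC hmin hs hσ rfl
  refine ⟨_, _, _, hN, hσ0, ?_, fun t ht => Gam_apply hmin.1.1 hmin.1.2.2.1 hN.Lpos ht⟩
  apply hN.ne_zero le_rfl
  have := mul_le_mul_of_nonneg_left (len_real hmin hs) hσ0.le
  linarith

lemma gam_ne_zero {t : ℝ} (ht : t ∈ Icc a b) : γ t ≠ 0 := by
  obtain ⟨Γ, L, σ, H, hσ, h0, hg⟩ := exists_Gam hmin hs
  intro h
  apply h0 (L / (b - a) * (t - a))
  rw [hg t ht, h, smul_zero]

lemma ae_indep : ∀ᵐ t ∂(volume.restrict (Icc a b)), t ∈ Ioo a b ∧ ∃ v : E3, HasDerivAt γ v t ∧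
    ⟪γ t, v⟫ ^ 2 < ‖γ t‖ ^ 2 * ‖v‖ ^ 2 := by
  obtain ⟨Γ, L, σ, H, hσ, h0, hg⟩ := exists_Gam hmin hs
  have hab := hmin.1.1
  have hba : 0 < b - a := by linarith
  have hL := H.Lpos
  set k := L / (b - a) with hk
  have hk0 : 0 < k := div_pos hL hba
  have h1 := H.unit_speed 0
  rw [ae_restrict_iff' measurableSet_Ioc, ae_iff] at h1
  have h2 := null_affine h1 hk0.ne' a
  rw [← Measure.restrict_congr_set (Ioo_ae_eq_Icc (a := a) (b := b))]
  rw [ae_restrict_iff' measurableSet_Ioo]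
  have h3 : ∀ᵐ t : ℝ, ¬ (k * (t - a) ∈ {x | ¬(x ∈ Ioc 0 (0 + L) → ‖deriv Γ x‖ = 1)}) := by
    rw [ae_iff]; simpa using h2
  filter_upwards [h3] with t ht htab
  refine ⟨htab, ?_⟩
  simp only [not_not] at ht
  have hmem : k * (t - a) ∈ Ioc 0 (0 + L) := by
    refine ⟨mul_pos hk0 (by linarith [htab.1]), ?_⟩
    rw [hk, zero_add, div_mul_eq_mul_div, div_le_iff₀ hba]
    nlinarith [htab.2]
  have hv := ht hmem
  have hdiff : DifferentiableAt ℝ Γ (k * (t - a)) := by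
    by_contra hc
    rw [deriv_zero_of_not_differentiableAt hc] at hv; norm_num at hv
  have hind := H.indep h0 hdiff.hasDerivAt hv
  set w := deriv Γ (k * (t - a)) with hw
  have hD : HasDerivAt (fun s => σ⁻¹ • Γ (k * (s - a))) (σ⁻¹ • (k • w)) t := by
    have e1 : HasDerivAt (fun s => k * (s - a)) k t := by
      simpa using ((hasDerivAt_id t).sub_const a).const_mul k
    exact (HasDerivAt.scomp t hdiff.hasDerivAt e1).const_smul σ⁻¹
  have heq : ∀ s ∈ Icc a b, γ s = σ⁻¹ • Γ (k * (s - a)) := by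
    intro s hs'
    rw [hg s hs', smul_smul, inv_mul_cancel₀ hσ.ne', one_smul]
  refine ⟨σ⁻¹ • (k • w), ?_, ?_⟩
  · apply hD.congr_of_eventuallyEq
    filter_upwards [Ioo_mem_nhds htab.1 htab.2] with s hs'
    exact heq s ⟨hs'.1.le, hs'.2.le⟩
  · rw [heq t ⟨htab.1.le, htab.2.le⟩]
    simp only [inner_smul_left, inner_smul_right, norm_smul, Real.norm_eq_abs, abs_of_pos hk0,
      abs_of_pos (inv_pos.2 hσ), RCLike.conj_to_real]
    have hp : 0 < (σ⁻¹ * (σ⁻¹ * k))^2 := by positivity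
    have := mul_lt_mul_of_pos_left hind hp
    nlinarith

/-- the spherical projection is Lipschitz -/
lemma proj_lip : ∃ K : ℝ≥0, ∀ s t, a ≤ s → s ≤ t → t ≤ b →
    eVariationOn (fun s => ‖γ s‖⁻¹ • γ s) (Icc s t) ≤ ENNReal.ofReal (K * (t - s)) := by
  have hab := hmin.1.1
  have hc := hmin.1.2.1
  obtain ⟨t0, ht0, hm⟩ := isCompact_Icc.exists_isMinOn (nonempty_Icc.2 hab.le) hc.norm
  set m := ‖γ t0‖ with hmdef
  have hm0 : 0 < m := norm_pos_iff.2 (gam_ne_zero hmin hs ht0)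
  have hmin' : ∀ s ∈ Icc a b, m ≤ ‖γ s‖ := fun s hs' => hm hs'
  have hN : LipschitzOnWith (2 / m).toNNReal (fun x : E3 => ‖x‖⁻¹ • x) {x | m ≤ ‖x‖} := by
    refine LipschitzOnWith.of_dist_le_mul fun x hx y hy => ?_
    have hx0 : 0 < ‖x‖ := hm0.trans_le hx
    have hy0 : 0 < ‖y‖ := hm0.trans_le hy
    rw [Real.coe_toNNReal _ (by positivity), dist_eq_norm, dist_eq_norm]
    have e : ‖x‖⁻¹ • x - ‖y‖⁻¹ • y = ‖x‖⁻¹ • (x - y) + (‖x‖⁻¹ * (‖y‖ - ‖x‖)) • (‖y‖⁻¹ • y) := by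
      rw [smul_sub, smul_smul]
      have : ‖x‖⁻¹ * (‖y‖ - ‖x‖) * ‖y‖⁻¹ = ‖x‖⁻¹ - ‖y‖⁻¹ := by field_simp
      rw [this, sub_smul]; abel
    rw [e]
    refine (norm_add_le _ _).trans ?_
    rw [norm_smul, norm_smul, norm_smul, norm_mul, norm_inv, norm_norm, norm_inv, norm_norm,
      inv_mul_cancel₀ hy0.ne', mul_one]
    have h1 : ‖‖y‖ - ‖x‖‖ ≤ ‖x - y‖ := by
      rw [norm_sub_rev x y]; exact abs_norm_sub_norm_le y x
    have h2 : ‖x‖⁻¹ ≤ m⁻¹ := inv_anti₀ hm0 hx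
    have h3 : 0 ≤ ‖x‖⁻¹ := by positivity
    calc ‖x‖⁻¹ * ‖x - y‖ + ‖x‖⁻¹ * ‖‖y‖ - ‖x‖‖ ≤ m⁻¹ * ‖x - y‖ + m⁻¹ * ‖x - y‖ := by gcongr
      _ = _ := by ring
  refine ⟨(2/m).toNNReal * C, fun s t h1 h2 h3 => ?_⟩
  have hmaps : MapsTo γ (Icc s t) {x | m ≤ ‖x‖} := fun u hu => hmin' u ⟨h1.trans hu.1, hu.2.trans h3⟩
  have hle := hN.comp_eVariationOn_le hmaps
  refine hle.trans ?_
  have e := hs (x := s) ⟨h1, h2.trans h3⟩ (y := t) ⟨h1.trans h2, h3⟩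
  rw [inter_eq_right.2 (Icc_subset_Icc h1 h3)] at e
  rw [e, NNReal.coe_mul, mul_assoc, ENNReal.ofReal_mul (NNReal.coe_nonneg _),
    ENNReal.ofReal_coe_nnreal, ENNReal.ofReal_mul (NNReal.coe_nonneg _), ENNReal.ofReal_mul (NNReal.coe_nonneg _),
    ENNReal.ofReal_coe_nnreal, ENNReal.ofReal_coe_nnreal]

lemma arc_sub : ∃ K : ℝ≥0, ∀ s t, a ≤ s → s < t → t ≤ b →
    0 < sphericalArc a γ t - sphericalArc a γ s ∧
    sphericalArc a γ t - sphericalArc a γ s ≤ K * (t - s) := by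
  obtain ⟨K, hK⟩ := proj_lip hmin hs
  refine ⟨K, fun s t h1 h2 h3 => ?_⟩
  have hadd := eVariationOn.Icc_add_Icc (fun s => ‖γ s‖⁻¹ • γ s) (s := univ) h1 h2.le (mem_univ _)
  simp only [univ_inter] at hadd
  have f1 := ne_top_of_le_ne_top ENNReal.ofReal_ne_top (hK a s le_rfl h1 (h2.le.trans h3))
  have k2 := hK s t h1 h2.le h3
  have f2 := ne_top_of_le_ne_top ENNReal.ofReal_ne_top k2
  have e : sphericalArc a γ t - sphericalArc a γ s =
      (eVariationOn (fun s => ‖γ s‖⁻¹ • γ s) (Icc s t)).toReal := by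
    unfold sphericalArc
    rw [← hadd, ENNReal.toReal_add f1 f2]; ring
  rw [e]
  constructor
  · apply ENNReal.toReal_pos _ f2
    intro hz
    rw [eVariationOn.eq_zero_iff] at hz
    set p0 := ‖γ s‖⁻¹ • γ s with hp0
    have hγs : γ s ≠ 0 := gam_ne_zero hmin hs ⟨h1, h2.le.trans h3⟩
    have hp1 : ‖p0‖ = 1 := by
      rw [hp0, norm_smul, norm_inv, norm_norm, inv_mul_cancel₀ (norm_ne_zero_iff.2 hγs)]
    have hpar : ∀ u ∈ Icc s t, γ u = ‖γ u‖ • p0 := by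
      intro u hu
      have hγu : γ u ≠ 0 := gam_ne_zero hmin hs ⟨h1.trans hu.1, hu.2.trans h3⟩
      have := edist_eq_zero.1 (hz u hu s (left_mem_Icc.2 h2.le))
      rw [hp0, ← this, smul_smul, mul_inv_cancel₀ (norm_ne_zero_iff.2 hγu), one_smul]
    have hae := ae_restrict_of_ae_restrict_of_subset
      (show Ioo s t ⊆ Icc a b from fun u hu => ⟨h1.trans hu.1.le, hu.2.le.trans h3⟩) (ae_indep hmin hs)
    obtain ⟨u, hu, -, v, hv, hlt⟩ : ∃ u, u ∈ Ioo s t ∧ u ∈ Ioo a b ∧ ∃ v : E3, HasDerivAt γ v u ∧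
        ⟪γ u, v⟫ ^ 2 < ‖γ u‖ ^ 2 * ‖v‖ ^ 2 := by
      have hne : (volume.restrict (Ioo s t)) ≠ 0 := by
        intro h
        rw [Measure.restrict_eq_zero, Real.volume_Ioo, ENNReal.ofReal_eq_zero] at h
        linarith
      have : (ae (volume.restrict (Ioo s t))).NeBot := ae_neBot.2 hne
      obtain ⟨u, h⟩ := (hae.and (ae_restrict_mem measurableSet_Ioo)).exists
      exact ⟨u, h.2, h.1⟩
    have hF : HasDerivAt (fun w => γ w - ⟪p0, γ w⟫ • p0) (v - ⟪p0, v⟫ • p0) u :=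
      hv.sub ((hasDerivAt_inner_const hv p0).smul_const p0)
    have hF0 : HasDerivAt (fun w => γ w - ⟪p0, γ w⟫ • p0) 0 u := by
      apply (hasDerivAt_const u (0:E3)).congr_of_eventuallyEq
      filter_upwards [Ioo_mem_nhds hu.1 hu.2] with w hw
      have := hpar w ⟨hw.1.le, hw.2.le⟩
      have h5 : ⟪p0, γ w⟫ = ‖γ w‖ := by
        rw [this, inner_smul_right, real_inner_self_eq_norm_sq, hp1, norm_smul, hp1]; simp
      rw [h5, ← this, sub_self]
    have hv0 := sub_eq_zero.1 (hF.unique hF0)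
    have hu0 := hpar u ⟨hu.1.le, hu.2.le⟩
    have i1 : ⟪γ u, v⟫ = ‖γ u‖ * ⟪p0, v⟫ := by
      conv_lhs => rw [hu0]
      rw [inner_smul_left]; simp
    have i2 : ‖v‖ ^ 2 = ⟪p0, v⟫ ^ 2 := by
      conv_lhs => rw [hv0]
      rw [norm_smul, hp1]; simp
    rw [i1, i2, mul_pow] at hlt
    exact lt_irrefl _ hlt
  · exact ENNReal.toReal_le_of_le_ofReal (mul_nonneg K.2 (by linarith)) k2

end

lemma unfold_inj {a : ℝ} {γ : ℝ → E3} {s t : ℝ} (hs : γ s ≠ 0) (ht : γ t ≠ 0)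
    (h : unfolding a γ s = unfolding a γ t)
    (h1 : |sphericalArc a γ t - sphericalArc a γ s| < 2 * π) : sphericalArc a γ t = sphericalArc a γ s := by
  have c0 := congrArg (fun x : E2 => x 0) h
  have c1 := congrArg (fun x : E2 => x 1) h
  simp [unfolding] at c0 c1
  set x := sphericalArc a γ s
  set y := sphericalArc a γ t
  have hr : 0 < ‖γ s‖ := norm_pos_iff.2 hs
  have hr' : 0 < ‖γ t‖ := norm_pos_iff.2 ht
  have q1 := sin_sq_add_cos_sq x
  have q2 := sin_sq_add_cos_sq y
  have e : ‖γ s‖^2 = ‖γ t‖^2 := by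
    calc ‖γ s‖^2 = (‖γ s‖ * cos x)^2 + (‖γ s‖ * sin x)^2 := by linear_combination -‖γ s‖^2 * q1
      _ = (‖γ t‖ * cos y)^2 + (‖γ t‖ * sin y)^2 := by rw [c0, c1]
      _ = _ := by linear_combination ‖γ t‖^2 * q2
  have e' : ‖γ s‖ = ‖γ t‖ := (sq_eq_sq₀ hr.le hr'.le).1 e
  rw [e'] at c0 c1
  have d0 := mul_left_cancel₀ hr'.ne' c0
  have d1 := mul_left_cancel₀ hr'.ne' c1
  have hcos : cos (y - x) = 1 := by
    rw [cos_sub, d0, d1]; linarith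
  have := (cos_eq_one_iff_of_lt_of_lt (by linarith [(abs_lt.1 h1).1]) (abs_lt.1 h1).2).1 hcos
  linarith

/-- For a constant speed minimal inspection curve, almost everywhere the position and
velocity vectors are linearly independent; consequently the spherical arclength function
is strictly increasing and the unfolding is locally one-to-one. -/
theorem minimal_inspection_unfolding_locally_injective
    (a b : ℝ) (γ : ℝ → E3) (C : ℝ≥0)
    (hmin : IsMinimalInspection a b γ)
    (hspeed : HasConstantSpeedOnWith γ (Set.Icc a b) C) :
    (∀ᵐ t ∂(volume.restrict (Set.Icc a b)), ∀ v : E3,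
      HasDerivWithinAt γ v (Set.Icc a b) t →
        ⟪γ t, v⟫ ^ 2 < ‖γ t‖ ^ 2 * ‖v‖ ^ 2) ∧
    StrictMonoOn (sphericalArc a γ) (Set.Icc a b) ∧
    (∀ t ∈ Set.Icc a b, ∃ U ∈ nhdsWithin t (Set.Icc a b),
      Set.InjOn (unfolding a γ) U) := by
  obtain ⟨K, hK⟩ := arc_sub hmin hspeed
  refine ⟨?_, ?_, ?_⟩
  · filter_upwards [ae_indep hmin hspeed] with t ⟨ht, w, hw, hlt⟩ v hv
    have hv' := hv.hasDerivAt (Icc_mem_nhds ht.1 ht.2)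
    rw [hv'.unique hw]; exact hlt
  · intro s hs t ht hst
    linarith [(hK s t hs.1 hst ht.2).1]
  · intro t0 ht0
    have hK0 : (0:ℝ) ≤ K := K.2
    set r : ℝ := π / (K + 1) with hr
    have hr0 : 0 < r := div_pos pi_pos (by linarith)
    have hKr : K * r < π := by
      rw [hr, mul_div_assoc', div_lt_iff₀ (by linarith)]
      nlinarith [pi_pos]
    refine ⟨Icc a b ∩ Ioo (t0 - r) (t0 + r), ?_, ?_⟩
    · exact Filter.inter_mem self_mem_nhdsWithin
        (mem_nhdsWithin_of_mem_nhds (Ioo_mem_nhds (by linarith) (by linarith)))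
    · have key : ∀ s ∈ Icc a b ∩ Ioo (t0 - r) (t0 + r), ∀ t ∈ Icc a b ∩ Ioo (t0 - r) (t0 + r),
          s < t → unfolding a γ s ≠ unfolding a γ t := by
        intro s hs t ht hst heq
        obtain ⟨g1, g2⟩ := hK s t hs.1.1 hst ht.1.2
        have g3 : K * (t - s) ≤ K * (2 * r) :=
          mul_le_mul_of_nonneg_left (by linarith [ht.2.2, hs.2.1]) hK0
        have := unfold_inj (gam_ne_zero hmin hspeed hs.1) (gam_ne_zero hmin hspeed ht.1) heq
          (by rw [abs_of_pos g1]; linarith)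
        linarith
      intro s hs t ht heq
      rcases lt_trichotomy s t with h | h | h
      · exact absurd heq (key s hs t ht h)
      · exact h
      · exact absurd heq.symm (key t ht s hs h)
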